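/- arXiv:1901.06482 — 8 statements merged into one kernel-verified Lean document; each statement's English description precedes it below -/
import Mathlib

section
/- Let (u^t, v^t)_{t≥0} be a Greenkhorn-type sequence and let (u*, v*) be a global minimizer of f. Then for every t ≥ 0, f(u^t, v^t) − f(u*, v*) ≤ 2(‖u*‖_∞ + ‖v*‖_∞) · E(u^t, v^t). -/
open Finset

/-- ℓ∞-norm of a vector in ℝ^n. -/
noncomputable def infNorm {n : ℕ} (u : Fin n → ℝ) : ℝ := ⨆ i, |u i|

/-- The matrix B(u,v) with entries exp(u_i + v_j - C_ij/η). -/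
noncomputable def Bmat {n : ℕ} (η : ℝ) (C : Fin n → Fin n → ℝ) (u v : Fin n → ℝ)
    (i j : Fin n) : ℝ := Real.exp (u i + v j - C i j / η)

/-- Row sums of B(u,v). -/
noncomputable def rowSum {n : ℕ} (η : ℝ) (C : Fin n → Fin n → ℝ) (u v : Fin n → ℝ)
    (i : Fin n) : ℝ := ∑ j, Bmat η C u v i j

/-- Column sums of B(u,v). -/
noncomputable def colSum {n : ℕ} (η : ℝ) (C : Fin n → Fin n → ℝ) (u v : Fin n → ℝ)
    (j : Fin n) : ℝ := ∑ i, Bmat η C u v i j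

/-- Dual objective f(u,v) = Σ_{ij} B(u,v)_{ij} - ⟨u,r⟩ - ⟨v,c⟩. -/
noncomputable def dualObj {n : ℕ} (η : ℝ) (C : Fin n → Fin n → ℝ) (r c : Fin n → ℝ)
    (u v : Fin n → ℝ) : ℝ :=
  (∑ i, ∑ j, Bmat η C u v i j) - (∑ i, u i * r i) - (∑ j, v j * c j)

/-- Residual E(u,v). -/
noncomputable def resid {n : ℕ} (η : ℝ) (C : Fin n → Fin n → ℝ) (r c : Fin n → ℝ)
    (u v : Fin n → ℝ) : ℝ :=
  (∑ i, |rowSum η C u v i - r i|) + (∑ j, |colSum η C u v j - c j|)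

/-- A single Greenkhorn-type update. -/
def GreenkhornStep {n : ℕ} (η : ℝ) (C : Fin n → Fin n → ℝ) (r c : Fin n → ℝ)
    (u v u' v' : Fin n → ℝ) : Prop :=
  (∃ I, u' I = u I + Real.log (r I) - Real.log (rowSum η C u v I) ∧
    (∀ i, i ≠ I → u' i = u i) ∧ v' = v) ∨
  (∃ J, v' J = v J + Real.log (c J) - Real.log (colSum η C u v J) ∧
    (∀ j, j ≠ J → v' j = v j) ∧ u' = u)

/-!
Track the larger of the sup-norm distances from `u` to `u*` and from `v` to `v*`. Exact
minimization of `f` in the coordinate `u_I` puts `u_I` at `log r_I - log ∑ j, exp (v_j - K_Ij)`,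
where `K = C / η`, and `u*_I` satisfies the same equation with `v*` in place of `v`. Log-sum-exp is
1-Lipschitz for the sup norm, so the new `u_I` lies within `‖v - v*‖_∞` of `u*_I`; hence the
distance never increases along the sequence. Convexity bounds `f(u, v) - f(u*, v*)` by the pairing
of `(u - u*, v - v*)` with the gradient of `f` at `(u, v)`, whose `ℓ¹` norm is the residual, so
the Hölder inequality concludes.
-/

open scoped Matrix

section SupNorm

variable {ι : Type*} [Fintype ι]

theorem dotProduct_le_norm_mul_sum_abs (a b : ι → ℝ) : a ⬝ᵥ b ≤ ‖a‖ * ∑ i, |b i| := by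
  rw [dotProduct, mul_sum]
  refine sum_le_sum fun i _ => (le_abs_self _).trans ?_
  rw [abs_mul]
  exact mul_le_mul_of_nonneg_right (norm_le_pi_norm a i) (abs_nonneg _)

theorem log_sum_exp_sub_log_sum_exp_le [Nonempty ι] (a b : ι → ℝ) :
    Real.log (∑ i, Real.exp (a i)) - Real.log (∑ i, Real.exp (b i)) ≤ ‖a - b‖ := by
  have sum_exp_pos (x : ι → ℝ) : 0 < ∑ i, Real.exp (x i) :=
    sum_pos (fun i _ => Real.exp_pos _) univ_nonempty
  have sum_le : ∑ i, Real.exp (a i) ≤ Real.exp ‖a - b‖ * ∑ i, Real.exp (b i) := by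
    rw [mul_sum]
    refine sum_le_sum fun i _ => ?_
    have coord_le : a i - b i ≤ ‖a - b‖ := (le_abs_self _).trans (norm_le_pi_norm (a - b) i)
    rw [← Real.exp_add, Real.exp_le_exp]
    exact sub_le_iff_le_add.mp coord_le
  rw [sub_le_iff_le_add, ← Real.log_exp ‖a - b‖,
    ← Real.log_mul (Real.exp_ne_zero _) (sum_exp_pos b).ne']
  exact Real.log_le_log (sum_exp_pos a) sum_le

theorem abs_log_sum_exp_sub_log_sum_exp_le [Nonempty ι] (a b : ι → ℝ) :
    |Real.log (∑ i, Real.exp (a i)) - Real.log (∑ i, Real.exp (b i))| ≤ ‖a - b‖ :=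
  abs_sub_le_iff.mpr ⟨log_sum_exp_sub_log_sum_exp_le a b,
    norm_sub_rev a b ▸ log_sum_exp_sub_log_sum_exp_le b a⟩

end SupNorm

section EntropicTransport

variable {ι κ : Type*}

/-- The Gibbs kernel `exp (-K)` with row `i` scaled by `exp (u i)` and column `j` by `exp (v j)`.
It is the matrix `B(u, v)` for arbitrary finite index types, the regularization being absorbed in
the cost: `K = C / η`. -/
noncomputable def scaledKernel (K : ι → κ → ℝ) (u : ι → ℝ) (v : κ → ℝ) : ι → κ → ℝ :=
  fun i j => Real.exp (u i + v j - K i j)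

theorem scaledKernel_sub_scaledKernel_le (K : ι → κ → ℝ) (u us : ι → ℝ) (v vs : κ → ℝ)
    (i : ι) (j : κ) :
    scaledKernel K u v i j - scaledKernel K us vs i j ≤
      (u i - us i) * scaledKernel K u v i j + (v j - vs j) * scaledKernel K u v i j := by
  have tangent := mul_le_mul_of_nonneg_left
    (Real.add_one_le_exp ((us i + vs j - K i j) - (u i + v j - K i j)))
    (Real.exp_pos (u i + v j - K i j)).le
  rw [← Real.exp_add, add_sub_cancel] at tangent
  simp only [scaledKernel]
  linarith

/-- The first marginal of the transport plan `scaledKernel K u v`. -/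
noncomputable def rowMarginal [Fintype κ] (K : ι → κ → ℝ) (u : ι → ℝ) (v : κ → ℝ) : ι → ℝ :=
  fun i => ∑ j, scaledKernel K u v i j

/-- The second marginal of the transport plan `scaledKernel K u v`. -/
noncomputable def colMarginal [Fintype ι] (K : ι → κ → ℝ) (u : ι → ℝ) (v : κ → ℝ) : κ → ℝ :=
  fun j => ∑ i, scaledKernel K u v i j

theorem rowMarginal_swap [Fintype ι] (K : ι → κ → ℝ) (u : ι → ℝ) (v : κ → ℝ) :
    rowMarginal (Function.swap K) v u = colMarginal K u v := by
  ext j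
  simp only [rowMarginal, colMarginal, scaledKernel, Function.swap, add_comm]

theorem log_rowMarginal [Fintype κ] [Nonempty κ] (K : ι → κ → ℝ) (u : ι → ℝ) (v : κ → ℝ)
    (i : ι) :
    Real.log (rowMarginal K u v i) = u i + Real.log (∑ j, Real.exp (v j - K i j)) := by
  have sum_exp_pos : 0 < ∑ j, Real.exp (v j - K i j) :=
    sum_pos (fun j _ => Real.exp_pos _) univ_nonempty
  simp only [rowMarginal, scaledKernel, add_sub_assoc, Real.exp_add, ← mul_sum]
  rw [Real.log_mul (Real.exp_ne_zero _) sum_exp_pos.ne', Real.log_exp]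

theorem abs_row_update_sub_le_norm_sub [Fintype κ] [Nonempty κ] (K : ι → κ → ℝ)
    (u us : ι → ℝ) (v vs : κ → ℝ) (i : ι) :
    |u i + Real.log (rowMarginal K us vs i) - Real.log (rowMarginal K u v i) - us i| ≤
      ‖v - vs‖ := by
  let lse (w : κ → ℝ) : ℝ := Real.log (∑ j, Real.exp (w j - K i j))
  calc |u i + Real.log (rowMarginal K us vs i) - Real.log (rowMarginal K u v i) - us i|
      = |lse vs - lse v| := by
        rw [log_rowMarginal, log_rowMarginal]
        congr 1
        ring
    _ ≤ ‖(fun j => vs j - K i j) - fun j => v j - K i j‖ := abs_log_sum_exp_sub_log_sum_exp_le _ _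
    _ = ‖vs - v‖ := congrArg norm (sub_sub_sub_cancel_right vs v (K i))
    _ = ‖v - vs‖ := norm_sub_rev vs v

variable [Fintype ι] [Fintype κ]

/-- The dual objective of entropic optimal transport between `r` and `c`, with the sign for which
it is to be minimized over the potentials `u` and `v`. -/
noncomputable def entropicDual (K : ι → κ → ℝ) (r : ι → ℝ) (c : κ → ℝ)
    (u : ι → ℝ) (v : κ → ℝ) : ℝ :=
  ∑ i, ∑ j, scaledKernel K u v i j - u ⬝ᵥ r - v ⬝ᵥ c

/-- The `ℓ¹` violation of the marginal constraints, which is the `ℓ¹` norm of the gradient of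
`entropicDual K r c` at `(u, v)`. -/
noncomputable def marginalError (K : ι → κ → ℝ) (r : ι → ℝ) (c : κ → ℝ)
    (u : ι → ℝ) (v : κ → ℝ) : ℝ :=
  ∑ i, |rowMarginal K u v i - r i| + ∑ j, |colMarginal K u v j - c j|

/-- The relation that `(u', v')` arises from `(u, v)` by a Greenkhorn update: one row or one column
of the scaled kernel, chosen by an arbitrary rule, is rescaled to its prescribed marginal. -/
def IsGreenkhornStep (K : ι → κ → ℝ) (r : ι → ℝ) (c : κ → ℝ)
    (u : ι → ℝ) (v : κ → ℝ) (u' : ι → ℝ) (v' : κ → ℝ) : Prop :=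
  (∃ I, u' I = u I + Real.log (r I) - Real.log (rowMarginal K u v I) ∧
    (∀ i, i ≠ I → u' i = u i) ∧ v' = v) ∨
  (∃ J, v' J = v J + Real.log (c J) - Real.log (colMarginal K u v J) ∧
    (∀ j, j ≠ J → v' j = v j) ∧ u' = u)

variable {K : ι → κ → ℝ} {r : ι → ℝ} {c : κ → ℝ} {u u' us : ι → ℝ} {v v' vs : κ → ℝ}

theorem marginalError_nonneg (K : ι → κ → ℝ) (r : ι → ℝ) (c : κ → ℝ) (u : ι → ℝ) (v : κ → ℝ) :
    0 ≤ marginalError K r c u v := by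
  unfold marginalError
  positivity

theorem entropicDual_swap (K : ι → κ → ℝ) (r : ι → ℝ) (c : κ → ℝ)
    (u : ι → ℝ) (v : κ → ℝ) : entropicDual (Function.swap K) c r v u = entropicDual K r c u v := by
  rw [entropicDual, entropicDual, sum_comm, sub_right_comm]
  simp only [scaledKernel, Function.swap, add_comm]

theorem hasDerivAt_entropicDual_add_smul (K : ι → κ → ℝ) (r : ι → ℝ) (c : κ → ℝ)
    (u h : ι → ℝ) (v : κ → ℝ) :
    HasDerivAt (fun s : ℝ => entropicDual K r c (u + s • h) v)
      (h ⬝ᵥ (rowMarginal K u v - r)) 0 := by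
  have line (i : ι) : HasDerivAt (fun s : ℝ => (u + s • h) i) (h i) 0 := by
    simpa using ((hasDerivAt_id (0 : ℝ)).mul_const (h i)).const_add (u i)
  have entry (i : ι) (j : κ) : HasDerivAt (fun s : ℝ => scaledKernel K (u + s • h) v i j)
      (scaledKernel K u v i j * h i) 0 := by
    simpa [scaledKernel] using (((line i).add_const (v j)).sub_const (K i j)).exp
  have total : HasDerivAt (fun s : ℝ => ∑ i, ∑ j, scaledKernel K (u + s • h) v i j)
      (∑ i, ∑ j, scaledKernel K u v i j * h i) 0 :=
    HasDerivAt.fun_sum fun i _ => HasDerivAt.fun_sum fun j _ => entry i j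
  have linear : HasDerivAt (fun s : ℝ => (u + s • h) ⬝ᵥ r) (h ⬝ᵥ r) 0 :=
    HasDerivAt.fun_sum fun i _ => (line i).mul_const (r i)
  refine ((total.sub linear).sub_const (v ⬝ᵥ c)).congr_deriv ?_
  simp only [← sum_mul, dotProduct, rowMarginal, Pi.sub_apply, ← sum_sub_distrib]
  exact sum_congr rfl fun i _ => by ring

theorem rowMarginal_eq_of_forall_entropicDual_le
    (hmin : ∀ u, entropicDual K r c us vs ≤ entropicDual K r c u vs) :
    rowMarginal K us vs = r := by
  set g := rowMarginal K us vs - r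
  have isLocalMin : IsLocalMin (fun s : ℝ => entropicDual K r c (us + s • g) vs) 0 :=
    .of_forall fun s => by simpa using hmin (us + s • g)
  have gradient_sq : g ⬝ᵥ g = 0 :=
    isLocalMin.hasDerivAt_eq_zero (hasDerivAt_entropicDual_add_smul K r c us g vs)
  exact sub_eq_zero.mp (dotProduct_self_eq_zero.mp gradient_sq)

theorem colMarginal_eq_of_forall_entropicDual_le
    (hmin : ∀ v, entropicDual K r c us vs ≤ entropicDual K r c us v) :
    colMarginal K us vs = c := by
  rw [← rowMarginal_swap]
  refine rowMarginal_eq_of_forall_entropicDual_le (c := r) fun v => ?_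
  simpa only [entropicDual_swap] using hmin v

theorem entropicDual_sub_entropicDual_le (K : ι → κ → ℝ) (r : ι → ℝ) (c : κ → ℝ)
    (u us : ι → ℝ) (v vs : κ → ℝ) :
    entropicDual K r c u v - entropicDual K r c us vs ≤
      (u - us) ⬝ᵥ (rowMarginal K u v - r) + (v - vs) ⬝ᵥ (colMarginal K u v - c) := by
  have mass_sub_le : ∑ i, ∑ j, scaledKernel K u v i j - ∑ i, ∑ j, scaledKernel K us vs i j ≤
      (u - us) ⬝ᵥ rowMarginal K u v + (v - vs) ⬝ᵥ colMarginal K u v := by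
    simp only [dotProduct, rowMarginal, colMarginal, mul_sum]
    rw [sum_comm (f := fun j i => (v - vs) j * scaledKernel K u v i j)]
    simp only [← sum_add_distrib, ← sum_sub_distrib]
    exact sum_le_sum fun i _ => sum_le_sum fun j _ =>
      scaledKernel_sub_scaledKernel_le K u us v vs i j
  simp only [entropicDual, dotProduct_sub, sub_dotProduct] at mass_sub_le ⊢
  linarith

theorem entropicDual_sub_le_max_norm_mul_marginalError (K : ι → κ → ℝ) (r : ι → ℝ) (c : κ → ℝ)
    (u us : ι → ℝ) (v vs : κ → ℝ) :
    entropicDual K r c u v - entropicDual K r c us vs ≤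
      max ‖u - us‖ ‖v - vs‖ * marginalError K r c u v := by
  calc entropicDual K r c u v - entropicDual K r c us vs
      ≤ (u - us) ⬝ᵥ (rowMarginal K u v - r) + (v - vs) ⬝ᵥ (colMarginal K u v - c) :=
        entropicDual_sub_entropicDual_le K r c u us v vs
    _ ≤ ‖u - us‖ * ∑ i, |rowMarginal K u v i - r i| +
          ‖v - vs‖ * ∑ j, |colMarginal K u v j - c j| :=
        add_le_add (dotProduct_le_norm_mul_sum_abs _ _) (dotProduct_le_norm_mul_sum_abs _ _)
    _ ≤ max ‖u - us‖ ‖v - vs‖ * marginalError K r c u v := by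
        rw [marginalError, mul_add]
        gcongr
        exacts [le_max_left _ _, le_max_right _ _]

theorem norm_sub_le_of_row_update [Nonempty κ] (hrow : rowMarginal K us vs = r) {I : ι}
    (hI : u' I = u I + Real.log (r I) - Real.log (rowMarginal K u v I))
    (hne : ∀ i, i ≠ I → u' i = u i) : ‖u' - us‖ ≤ max ‖u - us‖ ‖v - vs‖ := by
  refine (pi_norm_le_iff_of_nonneg (by positivity)).mpr fun i => ?_
  obtain rfl | hi := eq_or_ne i I
  · rw [Pi.sub_apply, hI, ← hrow]
    exact le_max_of_le_right (abs_row_update_sub_le_norm_sub K u us v vs i)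
  · rw [Pi.sub_apply, hne i hi]
    exact le_max_of_le_left (norm_le_pi_norm (u - us) i)

theorem IsGreenkhornStep.max_norm_sub_le [Nonempty ι] [Nonempty κ]
    (hstep : IsGreenkhornStep K r c u v u' v')
    (hrow : rowMarginal K us vs = r) (hcol : colMarginal K us vs = c) :
    max ‖u' - us‖ ‖v' - vs‖ ≤ max ‖u - us‖ ‖v - vs‖ := by
  rcases hstep with ⟨I, hI, hne, rfl⟩ | ⟨J, hJ, hne, rfl⟩
  · exact max_le (norm_sub_le_of_row_update hrow hI hne) (le_max_right _ _)
  · rw [← rowMarginal_swap] at hJ hcol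
    exact max_le (le_max_left _ _) (max_comm ‖v - vs‖ _ ▸ norm_sub_le_of_row_update hcol hJ hne)

theorem stmt0_general [Nonempty ι] [Nonempty κ] (K : ι → κ → ℝ) (r : ι → ℝ) (c : κ → ℝ)
    {U : ℕ → ι → ℝ} {V : ℕ → κ → ℝ} {us : ι → ℝ} {vs : κ → ℝ}
    (hstep : ∀ t, IsGreenkhornStep K r c (U t) (V t) (U (t + 1)) (V (t + 1)))
    (hmin : ∀ u v, entropicDual K r c us vs ≤ entropicDual K r c u v) (t : ℕ) :
    entropicDual K r c (U t) (V t) - entropicDual K r c us vs ≤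
      max ‖U 0 - us‖ ‖V 0 - vs‖ * marginalError K r c (U t) (V t) := by
  have hrow := rowMarginal_eq_of_forall_entropicDual_le fun u => hmin u vs
  have hcol := colMarginal_eq_of_forall_entropicDual_le (hmin us)
  have antitone_dist : Antitone fun t => max ‖U t - us‖ ‖V t - vs‖ :=
    antitone_nat_of_succ_le fun t => (hstep t).max_norm_sub_le hrow hcol
  exact (entropicDual_sub_le_max_norm_mul_marginalError K r c (U t) us (V t) vs).trans <|
    mul_le_mul_of_nonneg_right (antitone_dist t.zero_le) (marginalError_nonneg ..)

end EntropicTransport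

theorem norm_le_infNorm {n : ℕ} (u : Fin n → ℝ) : ‖u‖ ≤ infNorm u :=
  (pi_norm_le_iff_of_nonneg (Real.iSup_nonneg fun _ => abs_nonneg _)).mpr
    (le_ciSup (Set.finite_range fun i => |u i|).bddAbove)

theorem max_norm_zero_sub_le_two_mul_infNorm_add {n : ℕ} (u v : Fin n → ℝ) :
    max ‖0 - u‖ ‖0 - v‖ ≤ 2 * (infNorm u + infNorm v) := by
  rw [zero_sub, zero_sub, norm_neg, norm_neg]
  have hu := norm_le_infNorm u
  have hv := norm_le_infNorm v
  exact max_le (by linarith [norm_nonneg u, norm_nonneg v])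
    (by linarith [norm_nonneg u, norm_nonneg v])

theorem stmt0 (n : ℕ) (hn : 2 ≤ n) (η : ℝ) (hη : 0 < η)
    (C : Fin n → Fin n → ℝ) (hC : ∀ i j, 0 ≤ C i j)
    (r c : Fin n → ℝ) (hr : ∀ i, 0 < r i) (hc : ∀ j, 0 < c j)
    (hr1 : ∑ i, r i = 1) (hc1 : ∑ j, c j = 1)
    (U V : ℕ → Fin n → ℝ) (hU0 : U 0 = 0) (hV0 : V 0 = 0)
    (hstep : ∀ t, GreenkhornStep η C r c (U t) (V t) (U (t + 1)) (V (t + 1)))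
    (us vs : Fin n → ℝ)
    (hmin : ∀ u v : Fin n → ℝ, dualObj η C r c us vs ≤ dualObj η C r c u v) :
    ∀ t : ℕ, dualObj η C r c (U t) (V t) - dualObj η C r c us vs ≤
      2 * (infNorm us + infNorm vs) * resid η C r c (U t) (V t) := by
  have : Nonempty (Fin n) := ⟨⟨0, by omega⟩⟩
  exact fun t => (stmt0_general (fun i j => C i j / η) r c hstep hmin t).trans
    (mul_le_mul_of_nonneg_right
      (hU0 ▸ hV0 ▸ max_norm_zero_sub_le_two_mul_infNorm_add us vs) (marginalError_nonneg ..))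
end

section
/- Let (u*, v*) ∈ ℝ^n × ℝ^n satisfy r_i(B(u*,v*)) = r_i for all i and c_j(B(u*,v*)) = c_j for all j. If (u', v') is obtained from (u, v) ∈ ℝ^n × ℝ^n by a single Greenkhorn-type update, i.e. either there is an index I with u'_I = u_I + log r_I − log r_I(B(u,v)), u'_i = u_i for all i ≠ I, and v' = v, or there is an index J with v'_J = v_J + log c_J − log c_J(B(u,v)), v'_j = v_j for all j ≠ J, and u' = u, then max{‖u' − u*‖_∞, ‖v' − v*‖_∞} ≤ max{‖u − u*‖_∞, ‖v − v*‖_∞}. -/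
open Finset

/-!
Since `log r_I(B(u, v)) = u_I + L_I(v)` with `L_I(v) = log ∑ⱼ exp (v_j - C_Ij / η)`, a row update
replaces `u_I` by `log r_I - L_I(v)`, whatever `u_I` was, and the optimal potential satisfies
`u*_I = log r_I - L_I(v*)`. The new error is therefore `L_I(v*) - L_I(v)`. As `L_I` is monotone and
commutes with the addition of constants, it is `1`-Lipschitz for the sup norm, so the new error is
at most `‖v - v*‖_∞`. Column updates are row updates for the transposed kernel.
-/

section LogSumExp

variable {κ : Type*} [Fintype κ] {k : κ → ℝ}

/-- The log-sum-exp function `v ↦ log ∑ⱼ kⱼ exp vⱼ` with weights `k`. A weight may be zero, but the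
value is meaningful only when some weight is positive. -/
noncomputable def logSumExp (k v : κ → ℝ) : ℝ := Real.log (∑ j, k j * Real.exp (v j))

lemma sum_mul_exp_pos (hk : 0 < k) (v : κ → ℝ) : 0 < ∑ j, k j * Real.exp (v j) := by
  obtain ⟨hk_nonneg, j, hj⟩ := Pi.lt_def.mp hk
  exact sum_pos' (fun i _ => mul_nonneg (hk_nonneg i) (Real.exp_pos _).le)
    ⟨j, mem_univ j, mul_pos hj (Real.exp_pos _)⟩

lemma logSumExp_monotone (hk : 0 < k) : Monotone (logSumExp k) := fun v _ hvw =>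
  Real.log_le_log (sum_mul_exp_pos hk v) <| sum_le_sum fun j _ =>
    mul_le_mul_of_nonneg_left (Real.exp_le_exp.mpr (hvw j)) (hk.le j)

lemma logSumExp_const_add (hk : 0 < k) (a : ℝ) (v : κ → ℝ) :
    logSumExp k (fun j => a + v j) = a + logSumExp k v := by
  have factor_exp : ∑ j, k j * Real.exp (a + v j) = Real.exp a * ∑ j, k j * Real.exp (v j) := by
    simp only [Real.exp_add, mul_sum, mul_left_comm]
  rw [logSumExp, factor_exp, Real.log_mul (Real.exp_ne_zero a) (sum_mul_exp_pos hk v).ne',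
    Real.log_exp, logSumExp]

lemma lipschitzWith_one_logSumExp (hk : 0 < k) : LipschitzWith 1 (logSumExp k) :=
  LipschitzWith.of_le_add fun v w =>
    calc logSumExp k v ≤ logSumExp k (fun j => dist v w + w j) :=
          logSumExp_monotone hk fun j =>
            sub_le_iff_le_add.mp ((le_abs_self _).trans (dist_le_pi_dist v w j))
      _ = logSumExp k w + dist v w := by rw [logSumExp_const_add hk, add_comm]

end LogSumExp

section Scaling

variable {ι κ : Type*} [Fintype κ] {K : Matrix ι κ ℝ} {r u u' us : ι → ℝ} {v vs : κ → ℝ}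

/-- The row sums of the scaled matrix `diag (exp u) * K * diag (exp v)`. Its column sums are
`scaledRowSum Kᵀ v u`. -/
noncomputable def scaledRowSum (K : Matrix ι κ ℝ) (u : ι → ℝ) (v : κ → ℝ) (i : ι) : ℝ :=
  ∑ j, K i j * Real.exp (u i + v j)

/-- The vector `u'` arises from `u` by rescaling an arbitrary set of rows to their target sums `r`:
a Greenkhorn update rescales one row, a Sinkhorn update all of them. -/
def IsRowUpdate (K : Matrix ι κ ℝ) (r u : ι → ℝ) (v : κ → ℝ) (u' : ι → ℝ) : Prop :=
  ∀ i, u' i = u i ∨ u' i = u i + Real.log (r i) - Real.log (scaledRowSum K u v i)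

lemma row_pos_of_scaledRowSum_pos {i : ι} (hK : ∀ j, 0 ≤ K i j) (h : 0 < scaledRowSum K u v i) :
    0 < K i := by
  refine lt_of_le_of_ne hK fun h_zero => h.ne' ?_
  simp only [scaledRowSum, ← h_zero, Pi.zero_apply, zero_mul, sum_const_zero]

lemma log_scaledRowSum {i : ι} (hKi : 0 < K i) (u : ι → ℝ) (v : κ → ℝ) :
    Real.log (scaledRowSum K u v i) = u i + logSumExp (K i) v :=
  logSumExp_const_add hKi (u i) v

lemma abs_rescale_sub_le {i : ι} (hKi : 0 < K i) (u us : ι → ℝ) (v vs : κ → ℝ) :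
    |u i + Real.log (scaledRowSum K us vs i) - Real.log (scaledRowSum K u v i) - us i| ≤
      ‖v - vs‖ :=
  calc |u i + Real.log (scaledRowSum K us vs i) - Real.log (scaledRowSum K u v i) - us i|
      = |logSumExp (K i) v - logSumExp (K i) vs| := by
        rw [log_scaledRowSum hKi, log_scaledRowSum hKi, abs_sub_comm (logSumExp (K i) v)]
        ring_nf
    _ ≤ ‖v - vs‖ := by
        simpa only [NNReal.coe_one, one_mul, Real.norm_eq_abs] using
          (lipschitzWith_one_logSumExp hKi).norm_sub_le v vs

lemma IsRowUpdate.norm_sub_le [Fintype ι] (h : IsRowUpdate K r u v u') (hK : ∀ i j, 0 ≤ K i j)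
    (hr : ∀ i, 0 < r i) (hrow : ∀ i, scaledRowSum K us vs i = r i) :
    ‖u' - us‖ ≤ max ‖u - us‖ ‖v - vs‖ := by
  refine (pi_norm_le_iff_of_nonneg (le_max_of_le_left (norm_nonneg _))).mpr fun i => ?_
  rw [Pi.sub_apply]
  rcases h i with h_same | h_rescaled
  · rw [h_same]
    exact le_max_of_le_left (norm_le_pi_norm (u - us) i)
  · have hKi : 0 < K i := row_pos_of_scaledRowSum_pos (hK i) ((hr i).trans_eq (hrow i).symm)
    rw [h_rescaled, ← hrow i]
    exact le_max_of_le_right (abs_rescale_sub_le hKi u us v vs)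

end Scaling

open scoped Matrix in
theorem stmt2_general {ι κ : Type*} [Fintype ι] [Fintype κ] {K : Matrix ι κ ℝ}
    (hK : ∀ i j, 0 ≤ K i j) {r : ι → ℝ} {c : κ → ℝ} (hr : ∀ i, 0 < r i) (hc : ∀ j, 0 < c j)
    {us : ι → ℝ} {vs : κ → ℝ} (hrow : ∀ i, scaledRowSum K us vs i = r i)
    (hcol : ∀ j, scaledRowSum Kᵀ vs us j = c j) {u u' : ι → ℝ} {v v' : κ → ℝ}
    (hstep : IsRowUpdate K r u v u' ∧ v' = v ∨ IsRowUpdate Kᵀ c v u v' ∧ u' = u) :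
    max ‖u' - us‖ ‖v' - vs‖ ≤ max ‖u - us‖ ‖v - vs‖ := by
  rcases hstep with ⟨h_update, rfl⟩ | ⟨h_update, rfl⟩
  · exact max_le (h_update.norm_sub_le hK hr hrow) (le_max_right _ _)
  · refine max_le (le_max_left _ _) ?_
    rw [max_comm]
    exact h_update.norm_sub_le (fun j i => hK i j) hc hcol

lemma infNorm_eq_norm {n : ℕ} (w : Fin n → ℝ) : infNorm w = ‖w‖ :=
  le_antisymm (Real.iSup_le (norm_le_pi_norm w) (norm_nonneg w)) <|
    (pi_norm_le_iff_of_nonneg (Real.iSup_nonneg fun i => abs_nonneg (w i))).mpr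
      (le_ciSup (Set.finite_range fun i => |w i|).bddAbove)

section GibbsKernel

open scoped Matrix

variable {n : ℕ} {η : ℝ} {C : Fin n → Fin n → ℝ}

/-- The Gibbs kernel `exp (-C / η)` of entropic optimal transport, whose scalings are the matrices
`B(u, v)`. -/
noncomputable def gibbsKernel (η : ℝ) (C : Fin n → Fin n → ℝ) : Matrix (Fin n) (Fin n) ℝ :=
  Matrix.of fun i j => Real.exp (-(C i j / η))

lemma gibbsKernel_nonneg (i j : Fin n) : 0 ≤ gibbsKernel η C i j := (Real.exp_pos _).le

lemma Bmat_eq_gibbsKernel_mul_exp (u v : Fin n → ℝ) (i j : Fin n) :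
    Bmat η C u v i j = gibbsKernel η C i j * Real.exp (u i + v j) := by
  rw [Bmat, gibbsKernel, Matrix.of_apply, ← Real.exp_add, neg_add_eq_sub]

lemma rowSum_eq_scaledRowSum (u v : Fin n → ℝ) (i : Fin n) :
    rowSum η C u v i = scaledRowSum (gibbsKernel η C) u v i :=
  sum_congr rfl fun j _ => Bmat_eq_gibbsKernel_mul_exp u v i j

lemma colSum_eq_scaledRowSum_transpose (u v : Fin n → ℝ) (j : Fin n) :
    colSum η C u v j = scaledRowSum (gibbsKernel η C)ᵀ v u j :=
  sum_congr rfl fun i _ => by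
    rw [Bmat_eq_gibbsKernel_mul_exp, Matrix.transpose_apply, add_comm (u i)]

lemma GreenkhornStep.isRowUpdate_or {r c u v u' v' : Fin n → ℝ}
    (h : GreenkhornStep η C r c u v u' v') :
    IsRowUpdate (gibbsKernel η C) r u v u' ∧ v' = v ∨
      IsRowUpdate (gibbsKernel η C)ᵀ c v u v' ∧ u' = u := by
  simp only [GreenkhornStep, rowSum_eq_scaledRowSum, colSum_eq_scaledRowSum_transpose] at h
  rcases h with ⟨I, h_rescaled, h_same, hv⟩ | ⟨J, h_rescaled, h_same, hu⟩
  · refine Or.inl ⟨fun i => ?_, hv⟩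
    rcases eq_or_ne i I with rfl | hi
    exacts [Or.inr h_rescaled, Or.inl (h_same i hi)]
  · refine Or.inr ⟨fun j => ?_, hu⟩
    rcases eq_or_ne j J with rfl | hj
    exacts [Or.inr h_rescaled, Or.inl (h_same j hj)]

end GibbsKernel

theorem stmt2 (n : ℕ) (hn : 2 ≤ n) (η : ℝ) (hη : 0 < η)
    (C : Fin n → Fin n → ℝ) (hC : ∀ i j, 0 ≤ C i j)
    (r c : Fin n → ℝ) (hr : ∀ i, 0 < r i) (hc : ∀ j, 0 < c j)
    (hr1 : ∑ i, r i = 1) (hc1 : ∑ j, c j = 1)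
    (us vs : Fin n → ℝ)
    (hrow : ∀ i, rowSum η C us vs i = r i) (hcol : ∀ j, colSum η C us vs j = c j)
    (u v u' v' : Fin n → ℝ)
    (hstep : GreenkhornStep η C r c u v u' v') :
    max (infNorm (u' - us)) (infNorm (v' - vs)) ≤
      max (infNorm (u - us)) (infNorm (v - vs)) := by
  simp only [infNorm_eq_norm, rowSum_eq_scaledRowSum, colSum_eq_scaledRowSum_transpose]
    at hrow hcol ⊢
  exact stmt2_general gibbsKernel_nonneg hr hc hrow hcol hstep.isRowUpdate_or
end

section
/- If (u*, v*) ∈ ℝ^n × ℝ^n satisfies r_i(B(u*,v*)) = r_i for all i and c_j(B(u*,v*)) = c_j for all j, then max_{1≤i≤n} u*_i − min_{1≤i≤n} u*_i ≤ η^{-1}‖C‖_∞ − log(min_{1≤i,j≤n}{r_i, c_j}), and likewise max_{1≤i≤n} v*_i − min_{1≤i≤n} v*_i ≤ η^{-1}‖C‖_∞ − log(min_{1≤i,j≤n}{r_i, c_j}). -/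
open Finset

/-- ℓ∞-norm of a matrix: the maximum entry (entries are nonnegative). -/
noncomputable def matSup {n : ℕ} (C : Fin n → Fin n → ℝ) : ℝ := ⨆ i, ⨆ j, C i j

/-- min_{1 ≤ i, j ≤ n} { r_i, c_j }. -/
noncomputable def minrc {n : ℕ} (r c : Fin n → ℝ) : ℝ := min (⨅ i, r i) (⨅ j, c j)

/-!
Taking logarithms of the row equations, `u i = log (r i) - log (∑ j, exp (v j - K i j))`. The
log-sum-exp function is monotone and commutes with adding constants, hence nonexpansive in the sup
norm, so the second term varies with `i` by no more than the entries of `K` do; this bounds the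
spread of `u` whatever `v` is. Transposing `K` gives the bound for `v`.
-/

/-- The spread `max f - min f` of a real function `f` on a finite nonempty type. On an empty type,
or for an unbounded `f`, it has no meaning, since `⨆` and `⨅` then take the junk value `0`. -/
noncomputable def spread {ι : Type*} (f : ι → ℝ) : ℝ := (⨆ i, f i) - ⨅ i, f i

theorem sub_le_spread {ι : Type*} [Finite ι] (f : ι → ℝ) (i k : ι) : f i - f k ≤ spread f :=
  sub_le_sub (Finite.le_ciSup f i) (Finite.ciInf_le f k)

theorem spread_le_of_forall_sub_le {ι : Type*} [Nonempty ι] {f : ι → ℝ} {D : ℝ}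
    (h : ∀ i k, f i - f k ≤ D) : spread f ≤ D :=
  sub_le_comm.mp <| le_ciInf fun k => sub_le_iff_le_add.mpr <| ciSup_le fun i =>
    sub_le_iff_le_add'.mp (h i k)

theorem spread_le_sub_of_mem_Icc {ι : Type*} [Nonempty ι] {f : ι → ℝ} {a b : ℝ}
    (h : ∀ i, f i ∈ Set.Icc a b) : spread f ≤ b - a :=
  sub_le_sub (ciSup_le fun i => (h i).2) (le_ciInf fun i => (h i).1)

theorem spread_log_le_neg_log {ι : Type*} [Fintype ι] [Nonempty ι] {p : ι → ℝ} {m : ℝ}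
    (hm : 0 < m) (hmp : ∀ i, m ≤ p i) (hp : ∑ i, p i = 1) :
    spread (fun i => Real.log (p i)) ≤ -Real.log m := by
  have hp_nonneg (i : ι) : 0 ≤ p i := hm.le.trans (hmp i)
  have hp_le_one (i : ι) : p i ≤ 1 :=
    hp ▸ single_le_sum (fun k _ => hp_nonneg k) (mem_univ i)
  rw [← zero_sub]
  exact spread_le_sub_of_mem_Icc fun i =>
    ⟨Real.log_le_log hm (hmp i), Real.log_nonpos (hp_nonneg i) (hp_le_one i)⟩

section LogSumExp

variable {κ : Type*} [Fintype κ] [Nonempty κ]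

theorem sum_exp_pos (x : κ → ℝ) : 0 < ∑ j, Real.exp (x j) :=
  sum_pos (fun _ _ => Real.exp_pos _) univ_nonempty

theorem log_sum_exp_const_add (a : ℝ) (x : κ → ℝ) :
    Real.log (∑ j, Real.exp (a + x j)) = a + Real.log (∑ j, Real.exp (x j)) := by
  simp_rw [Real.exp_add, ← mul_sum]
  rw [Real.log_mul (Real.exp_ne_zero a) (sum_exp_pos x).ne', Real.log_exp]

theorem log_sum_exp_le_log_sum_exp {x y : κ → ℝ} (h : ∀ j, x j ≤ y j) :
    Real.log (∑ j, Real.exp (x j)) ≤ Real.log (∑ j, Real.exp (y j)) :=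
  Real.log_le_log (sum_exp_pos x) <| sum_le_sum fun j _ => Real.exp_le_exp.mpr (h j)

theorem log_sum_exp_le_add_log_sum_exp {x y : κ → ℝ} {D : ℝ} (h : ∀ j, x j ≤ D + y j) :
    Real.log (∑ j, Real.exp (x j)) ≤ D + Real.log (∑ j, Real.exp (y j)) :=
  (log_sum_exp_le_log_sum_exp h).trans_eq (log_sum_exp_const_add D y)

end LogSumExp

theorem spread_le_add_spread_log_of_sum_exp_eq {ι κ : Type*} [Finite ι] [Nonempty ι] [Fintype κ]
    [Nonempty κ] {K : ι → κ → ℝ} {r u : ι → ℝ} {v : κ → ℝ} {D : ℝ}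
    (hK : ∀ i k j, K i j - K k j ≤ D) (hrow : ∀ i, ∑ j, Real.exp (u i + v j - K i j) = r i) :
    spread u ≤ D + spread (fun i => Real.log (r i)) := by
  have log_row (i : ι) : Real.log (r i) = u i + Real.log (∑ j, Real.exp (v j - K i j)) := by
    rw [← hrow, ← log_sum_exp_const_add]
    simp_rw [add_sub_assoc]
  refine spread_le_of_forall_sub_le fun i k => ?_
  have hlse : Real.log (∑ j, Real.exp (v j - K k j)) ≤
      D + Real.log (∑ j, Real.exp (v j - K i j)) :=
    log_sum_exp_le_add_log_sum_exp fun j => by linarith [hK i k j]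
  have hlog : Real.log (r i) - Real.log (r k) ≤ spread fun i => Real.log (r i) :=
    sub_le_spread (fun i => Real.log (r i)) i k
  linarith [log_row i, log_row k]

theorem stmt4_general {ι κ : Type*} [Fintype ι] [Nonempty ι] [Fintype κ] [Nonempty κ]
    (K : ι → κ → ℝ) {r u : ι → ℝ} {c v : κ → ℝ}
    (hrow : ∀ i, ∑ j, Real.exp (u i + v j - K i j) = r i)
    (hcol : ∀ j, ∑ i, Real.exp (u i + v j - K i j) = c j) :
    spread u ≤ spread (fun p : ι × κ => K p.1 p.2) + spread (fun i => Real.log (r i)) ∧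
      spread v ≤ spread (fun p : ι × κ => K p.1 p.2) + spread (fun j => Real.log (c j)) := by
  have hK (p q : ι × κ) : K p.1 p.2 - K q.1 q.2 ≤ spread fun p : ι × κ => K p.1 p.2 :=
    sub_le_spread (fun p : ι × κ => K p.1 p.2) p q
  have hcol' (j : κ) : ∑ i, Real.exp (v j + u i - K i j) = c j := by
    simp_rw [← hcol j, add_comm (v j)]
  exact ⟨spread_le_add_spread_log_of_sum_exp_eq (fun i k j => hK (i, j) (k, j)) hrow,
    spread_le_add_spread_log_of_sum_exp_eq (fun j l i => hK (i, j) (i, l)) hcol'⟩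

section SquareCost

variable {n : ℕ}

theorem le_matSup (C : Fin n → Fin n → ℝ) (i j : Fin n) : C i j ≤ matSup C :=
  (Finite.le_ciSup (C i) j).trans (Finite.le_ciSup (fun i => ⨆ j, C i j) i)

theorem minrc_le_left (r c : Fin n → ℝ) (i : Fin n) : minrc r c ≤ r i :=
  (min_le_left _ _).trans (Finite.ciInf_le r i)

theorem minrc_le_right (r c : Fin n → ℝ) (j : Fin n) : minrc r c ≤ c j :=
  (min_le_right _ _).trans (Finite.ciInf_le c j)

variable [Nonempty (Fin n)]

theorem minrc_pos {r c : Fin n → ℝ} (hr : ∀ i, 0 < r i) (hc : ∀ j, 0 < c j) : 0 < minrc r c := by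
  obtain ⟨i, hi⟩ := exists_eq_ciInf_of_finite (f := r)
  obtain ⟨j, hj⟩ := exists_eq_ciInf_of_finite (f := c)
  rw [minrc, ← hi, ← hj]
  exact lt_min (hr i) (hc j)

theorem spread_div_le_matSup_div {η : ℝ} (hη : 0 ≤ η) {C : Fin n → Fin n → ℝ}
    (hC : ∀ i j, 0 ≤ C i j) :
    spread (fun p : Fin n × Fin n => C p.1 p.2 / η) ≤ matSup C / η := by
  rw [← sub_zero (matSup C / η)]
  exact spread_le_sub_of_mem_Icc fun p =>
    ⟨div_nonneg (hC p.1 p.2) hη, div_le_div_of_nonneg_right (le_matSup C p.1 p.2) hη⟩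

theorem spread_div_add_spread_log_le {η m : ℝ} (hη : 0 ≤ η) {C : Fin n → Fin n → ℝ}
    (hC : ∀ i j, 0 ≤ C i j) {p : Fin n → ℝ} (hm : 0 < m) (hmp : ∀ i, m ≤ p i)
    (hp : ∑ i, p i = 1) :
    spread (fun q : Fin n × Fin n => C q.1 q.2 / η) + spread (fun i => Real.log (p i)) ≤
      matSup C / η - Real.log m :=
  add_le_add (spread_div_le_matSup_div hη hC) (spread_log_le_neg_log hm hmp hp)

end SquareCost

theorem stmt4 (n : ℕ) (hn : 2 ≤ n) (η : ℝ) (hη : 0 < η)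
    (C : Fin n → Fin n → ℝ) (hC : ∀ i j, 0 ≤ C i j)
    (r c : Fin n → ℝ) (hr : ∀ i, 0 < r i) (hc : ∀ j, 0 < c j)
    (hr1 : ∑ i, r i = 1) (hc1 : ∑ j, c j = 1)
    (us vs : Fin n → ℝ)
    (hrow : ∀ i, rowSum η C us vs i = r i) (hcol : ∀ j, colSum η C us vs j = c j) :
    (⨆ i, us i) - (⨅ i, us i) ≤ matSup C / η - Real.log (minrc r c) ∧
    (⨆ i, vs i) - (⨅ i, vs i) ≤ matSup C / η - Real.log (minrc r c) := by
  have : Nonempty (Fin n) := ⟨⟨0, by omega⟩⟩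
  exact (stmt4_general (fun i j => C i j / η) hrow hcol).imp
    (·.trans (spread_div_add_spread_log_le hη.le hC (minrc_pos hr hc) (minrc_le_left r c) hr1))
    (·.trans (spread_div_add_spread_log_le hη.le hC (minrc_pos hr hc) (minrc_le_right r c) hc1))
end

section
/- The dual objective φ is smooth with respect to the ℓ∞-norm: for all λ₁, λ₂ ∈ ℝ^m, φ(λ₁) − φ(λ₂) − ⟨b − A x(λ₂), λ₁ − λ₂⟩ ≤ (‖A‖_{1→1}² / (2η)) ‖λ₁ − λ₂‖_∞². -/
open Finset

/-- ℓ1-norm of a vector. -/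
noncomputable def l1Norm {k : ℕ} (x : Fin k → ℝ) : ℝ := ∑ i, |x i|

/-- ℓ∞-norm of a vector. -/
noncomputable def linfNorm {k : ℕ} (x : Fin k → ℝ) : ℝ := ⨆ i, |x i|

/-- ℓ1→ℓ1 operator norm of a matrix: the maximum ℓ1-norm of a column. -/
noncomputable def oneOneNorm {m n : ℕ} (A : Fin m → Fin n → ℝ) : ℝ := ⨆ j, ∑ i, |A i j|

/-!
The Lagrangian at the maximiser `x₂` of the problem defining `φ λ₂` is strongly convex, so it grows
at least like `(η / 2) ‖x - x₂‖²` around `x₂`. Passing from `λ₂` to `λ₁` perturbs it by the linear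
term `⟨λ₁ - λ₂, A (x - x₂)⟩`, of size at most `‖A‖ ‖λ₁ - λ₂‖ ‖x - x₂‖`; maximising the linear minus
the quadratic term over `‖x - x₂‖` gives the constant `‖A‖² / (2η)`.
-/

open Set Filter WithLp
open scoped Matrix Topology

section UniformConvexity

variable {E : Type*} [NormedAddCommGroup E] [NormedSpace ℝ E] {s : Set E} {f : E → ℝ}

lemma add_modulus_le_of_isMinOn {ψ : ℝ → ℝ} {x₀ x : E} (hf : UniformConvexOn s ψ f)
    (hmin : IsMinOn f s x₀) (hx₀ : x₀ ∈ s) (hx : x ∈ s) : f x₀ + ψ ‖x - x₀‖ ≤ f x := by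
  have hsegment : ∀ t ∈ Ioo (0 : ℝ) 1, f x₀ + (1 - t) * ψ ‖x - x₀‖ ≤ f x := by
    rintro t ⟨ht₀, ht₁⟩
    have hmem : t • x + (1 - t) • x₀ ∈ s :=
      hf.1 hx hx₀ ht₀.le (sub_nonneg.2 ht₁.le) (add_sub_cancel t 1)
    have hconv := hf.2 hx hx₀ ht₀.le (sub_nonneg.2 ht₁.le) (add_sub_cancel t 1)
    have hle : f x₀ ≤ f (t • x + (1 - t) • x₀) := hmin hmem
    simp only [smul_eq_mul] at hconv
    refine le_of_mul_le_mul_left ?_ ht₀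
    linarith
  have hcont : Continuous fun t : ℝ ↦ f x₀ + (1 - t) * ψ ‖x - x₀‖ := by fun_prop
  have hlim : Tendsto (fun t : ℝ ↦ f x₀ + (1 - t) * ψ ‖x - x₀‖) (𝓝[>] 0)
      (𝓝 (f x₀ + ψ ‖x - x₀‖)) := by
    simpa only [sub_zero, one_mul] using (hcont.tendsto 0).mono_left nhdsWithin_le_nhds
  exact le_of_tendsto hlim (eventually_of_mem (Ioo_mem_nhdsGT one_pos) hsegment)

lemma strongConvexOn_of_forall_exists_subgradient {η : ℝ} (hs : Convex ℝ s)
    (h : ∀ x ∈ s, ∃ g : E →ₗ[ℝ] ℝ, ∀ y ∈ s, f x + g (y - x) + η / 2 * ‖y - x‖ ^ 2 ≤ f y) :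
    StrongConvexOn s η f := by
  refine ⟨hs, fun x hx y hy a b ha hb hab ↦ ?_⟩
  obtain ⟨g, hg⟩ := h (a • x + b • y) (hs hx hy ha hb hab)
  obtain rfl : a = 1 - b := eq_sub_of_add_eq hab
  have hx_sub : x - ((1 - b) • x + b • y) = b • (x - y) := by module
  have hy_sub : y - ((1 - b) • x + b • y) = -((1 - b) • (x - y)) := by module
  have hgx := hg x hx
  have hgy := hg y hy
  rw [hx_sub, map_smul, norm_smul, Real.norm_of_nonneg hb, smul_eq_mul] at hgx
  rw [hy_sub, map_neg, map_smul, norm_neg, norm_smul, Real.norm_of_nonneg ha, smul_eq_mul] at hgy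
  simp only [smul_eq_mul]
  linear_combination (1 - b) * hgx + b * hgy

end UniformConvexity

lemma mul_sub_half_mul_sq_le {η : ℝ} (hη : 0 < η) (r t : ℝ) :
    r * t - η / 2 * t ^ 2 ≤ r ^ 2 / (2 * η) := by
  rw [le_div_iff₀ (by positivity)]
  linear_combination sq_nonneg (r - η * t)

theorem stmt8_general {E Λ : Type*} [NormedAddCommGroup E] [NormedSpace ℝ E]
    [SeminormedAddCommGroup Λ] [NormedSpace ℝ Λ] (B : Λ →L[ℝ] StrongDual ℝ E) (c : Λ →ₗ[ℝ] ℝ)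
    {η : ℝ} (hη : 0 < η) {s : Set E} {f : E → ℝ} (hf : StrongConvexOn s η f) {φ : Λ → ℝ}
    (hφ : ∀ lam, IsLUB ((fun x ↦ c lam - f x - B lam x) '' s) (φ lam)) {lam₁ lam₂ : Λ} {x₂ : E}
    (hx₂ : x₂ ∈ s) (hattained : φ lam₂ = c lam₂ - f x₂ - B lam₂ x₂) :
    φ lam₁ - φ lam₂ - (c (lam₁ - lam₂) - B (lam₁ - lam₂) x₂) ≤
      ‖B‖ ^ 2 / (2 * η) * ‖lam₁ - lam₂‖ ^ 2 := by
  have hmin : IsMinOn (f + ⇑(B lam₂)) s x₂ := fun x hx ↦ by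
    have := (hφ lam₂).1 (mem_image_of_mem _ hx)
    change f x₂ + B lam₂ x₂ ≤ f x + B lam₂ x
    linarith
  have hconv : UniformConvexOn s ((fun r ↦ η / 2 * r ^ 2) + 0) (f + ⇑(B lam₂)) :=
    hf.add (uniformConvexOn_zero.2 ((B lam₂).toLinearMap.convexOn hf.1))
  suffices hφ_le : φ lam₁ ≤ φ lam₂ + (c (lam₁ - lam₂) - B (lam₁ - lam₂) x₂) +
      (‖B‖ * ‖lam₁ - lam₂‖) ^ 2 / (2 * η) by
    linear_combination hφ_le
  refine (hφ lam₁).2 (forall_mem_image.2 fun x hx ↦ ?_)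
  have hgrowth := add_modulus_le_of_isMinOn hconv hmin hx₂ hx
  have hpairing : -B (lam₁ - lam₂) (x - x₂) ≤ ‖B‖ * ‖lam₁ - lam₂‖ * ‖x - x₂‖ :=
    (neg_le_abs _).trans (B.le_opNorm₂ _ _)
  have hyoung := mul_sub_half_mul_sq_le hη (‖B‖ * ‖lam₁ - lam₂‖) ‖x - x₂‖
  simp only [Pi.add_apply, Pi.zero_apply, add_zero] at hgrowth
  simp only [map_sub, sub_apply] at hpairing ⊢
  linarith

section L1

lemma norm_toLp_one_eq_l1Norm {k : ℕ} (x : Fin k → ℝ) : ‖toLp 1 x‖ = l1Norm x :=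
  PiLp.norm_eq_of_L1 _

lemma norm_eq_linfNorm {k : ℕ} (x : Fin k → ℝ) : ‖x‖ = linfNorm x :=
  (PiLp.norm_toLp x).symm

lemma abs_dotProduct_le_norm_mul_norm_toLp_one {ι : Type*} [Fintype ι] (u x : ι → ℝ) :
    |u ⬝ᵥ x| ≤ ‖u‖ * ‖toLp 1 x‖ :=
  calc |u ⬝ᵥ x| ≤ ∑ i, |u i * x i| := Finset.abs_sum_le_sum_abs _ _
    _ ≤ ∑ i, ‖u‖ * |x i| := by
      gcongr with i
      rw [abs_mul]
      gcongr
      exact norm_le_pi_norm u i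
    _ = ‖u‖ * ‖toLp 1 x‖ := by
      rw [← Finset.mul_sum, PiLp.norm_eq_of_L1]
      rfl

variable {m n : ℕ} (A : Fin m → Fin n → ℝ)

lemma oneOneNorm_nonneg : 0 ≤ oneOneNorm A :=
  Real.iSup_nonneg fun _ ↦ Finset.sum_nonneg fun _ _ ↦ abs_nonneg _

lemma norm_transpose_mulVec_le (lam : Fin m → ℝ) :
    ‖(Matrix.of A)ᵀ *ᵥ lam‖ ≤ oneOneNorm A * ‖lam‖ := by
  refine (pi_norm_le_iff_of_nonneg (mul_nonneg (oneOneNorm_nonneg A) (norm_nonneg _))).2 fun j ↦ ?_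
  have hcolumn : ‖toLp 1 fun i ↦ A i j‖ ≤ oneOneNorm A :=
    (norm_toLp_one_eq_l1Norm _).trans_le (le_ciSup (finite_range fun j ↦ ∑ i, |A i j|).bddAbove j)
  calc ‖((Matrix.of A)ᵀ *ᵥ lam) j‖ = |lam ⬝ᵥ fun i ↦ A i j| := congrArg _ (dotProduct_comm _ _)
    _ ≤ ‖lam‖ * ‖toLp 1 fun i ↦ A i j‖ := abs_dotProduct_le_norm_mul_norm_toLp_one _ _
    _ ≤ oneOneNorm A * ‖lam‖ := by rw [mul_comm]; gcongr

/-- The adjoint `Aᵀ : ℓ∞ → (ℓ¹)*` of `A : ℓ¹ → ℓ¹`, i.e. the pairing `λ ↦ ⟨Aᵀλ, ·⟩`. The type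
`Fin m → ℝ` of multipliers already carries the ℓ∞-norm; the ℓ¹-norm comes from `PiLp 1`. -/
noncomputable def l1Adjoint :
    (Fin m → ℝ) →L[ℝ] StrongDual ℝ (PiLp 1 fun _ : Fin n ↦ ℝ) :=
  ((dotProductBilin ℝ ℝ ∘ₗ (Matrix.of A)ᵀ.mulVecLin).compl₂
    (WithLp.linearEquiv 1 ℝ (Fin n → ℝ)).toLinearMap).mkContinuous₂ (oneOneNorm A) fun lam _ ↦
      (abs_dotProduct_le_norm_mul_norm_toLp_one _ _).trans
        (mul_le_mul_of_nonneg_right (norm_transpose_mulVec_le A lam) (norm_nonneg _))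

lemma l1Adjoint_apply (lam : Fin m → ℝ) (x : PiLp 1 fun _ : Fin n ↦ ℝ) :
    l1Adjoint A lam x = ∑ j, (∑ i, A i j * lam i) * x j :=
  rfl

lemma norm_l1Adjoint_le : ‖l1Adjoint A‖ ≤ oneOneNorm A :=
  LinearMap.mkContinuous₂_norm_le _ (oneOneNorm_nonneg A) _

lemma sum_mul_add_eq_dotProduct_sub_l1Adjoint (b lam : Fin m → ℝ) (v : ℝ) (x : Fin n → ℝ) :
    ∑ i, lam i * b i + (-v - ∑ j, (∑ i, A i j * lam i) * x j) =
      b ⬝ᵥ lam - v - l1Adjoint A lam (toLp 1 x) := by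
  rw [l1Adjoint_apply, dotProduct_comm, dotProduct]
  ring

lemma isLUB_dotProduct_sub_l1Adjoint {f : (Fin n → ℝ) → ℝ} {lam : Fin m → ℝ} {x₀ : Fin n → ℝ}
    (b : Fin m → ℝ) (h : ∀ x, -f x - ∑ j, (∑ i, A i j * lam i) * x j ≤
      -f x₀ - ∑ j, (∑ i, A i j * lam i) * x₀ j) :
    IsLUB ((fun x ↦ b ⬝ᵥ lam - f (ofLp x) - l1Adjoint A lam x) '' univ)
      (∑ i, lam i * b i + (-f x₀ - ∑ j, (∑ i, A i j * lam i) * x₀ j)) := by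
  refine IsGreatest.isLUB ⟨⟨toLp 1 x₀, mem_univ _,
    (sum_mul_add_eq_dotProduct_sub_l1Adjoint A b lam _ x₀).symm⟩, forall_mem_image.2 fun x _ ↦ ?_⟩
  exact (sum_mul_add_eq_dotProduct_sub_l1Adjoint A b lam _ (ofLp x)).symm.trans_le
    (add_le_add_right (h (ofLp x)) _)

lemma sum_sub_mul_eq_dotProduct_sub_l1Adjoint (b lam : Fin m → ℝ) (x : Fin n → ℝ) :
    ∑ i, (b i - ∑ j, A i j * x j) * lam i = b ⬝ᵥ lam - l1Adjoint A lam (toLp 1 x) :=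
  calc (b - Matrix.of A *ᵥ x) ⬝ᵥ lam = b ⬝ᵥ lam - lam ⬝ᵥ Matrix.of A *ᵥ x := by
        rw [sub_dotProduct, dotProduct_comm lam]
    _ = b ⬝ᵥ lam - (Matrix.of A)ᵀ *ᵥ lam ⬝ᵥ x := by
        rw [Matrix.dotProduct_mulVec, Matrix.mulVec_transpose]

lemma strongConvexOn_comp_ofLp_of_forall_exists_subgradient {η : ℝ} {f : (Fin n → ℝ) → ℝ}
    (h : ∀ x, ∃ g : (Fin n → ℝ) →ₗ[ℝ] ℝ, ∀ y,
      f x + g (y - x) + η / 2 * l1Norm (y - x) ^ 2 ≤ f y) :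
    StrongConvexOn univ η fun x : PiLp 1 fun _ : Fin n ↦ ℝ ↦ f (ofLp x) := by
  refine strongConvexOn_of_forall_exists_subgradient convex_univ fun x _ ↦ ?_
  obtain ⟨g, hg⟩ := h (ofLp x)
  refine ⟨g ∘ₗ (WithLp.linearEquiv 1 ℝ (Fin n → ℝ)).toLinearMap, fun y _ ↦ ?_⟩
  have hgy := hg (ofLp y)
  rwa [← norm_toLp_one_eq_l1Norm] at hgy

end L1

theorem stmt8 (m n : ℕ) (A : Fin m → Fin n → ℝ) (b : Fin m → ℝ)
    (η : ℝ) (hη : 0 < η) (f : (Fin n → ℝ) → ℝ)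
    (hdiff : Differentiable ℝ f)
    (hsc : ∀ x x' : Fin n → ℝ,
      f x + fderiv ℝ f x (x' - x) + η / 2 * (l1Norm (x' - x)) ^ 2 ≤ f x')
    (xopt : (Fin m → ℝ) → (Fin n → ℝ))
    (hxopt : ∀ (lam : Fin m → ℝ) (x : Fin n → ℝ),
      -f x - ∑ j, (∑ i, A i j * lam i) * x j ≤
        -f (xopt lam) - ∑ j, (∑ i, A i j * lam i) * xopt lam j)
    (φ : (Fin m → ℝ) → ℝ)
    (hφ : ∀ lam : Fin m → ℝ,
      φ lam = (∑ i, lam i * b i) +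
        (-f (xopt lam) - ∑ j, (∑ i, A i j * lam i) * xopt lam j)) :
    ∀ lam1 lam2 : Fin m → ℝ,
      φ lam1 - φ lam2 -
        (∑ i, (b i - ∑ j, A i j * xopt lam2 j) * (lam1 i - lam2 i)) ≤
      (oneOneNorm A) ^ 2 / (2 * η) * (linfNorm (lam1 - lam2)) ^ 2 := by
  intro lam1 lam2
  have hsmooth := stmt8_general (l1Adjoint A) (dotProductBilin ℝ ℝ b) hη
    (strongConvexOn_comp_ofLp_of_forall_exists_subgradient fun x ↦ ⟨fderiv ℝ f x, hsc x⟩)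
    (fun lam ↦ (hφ lam).symm ▸ isLUB_dotProduct_sub_l1Adjoint A b (hxopt lam))
    (lam₁ := lam1) (mem_univ (toLp 1 (xopt lam2)))
    ((hφ lam2).trans (sum_mul_add_eq_dotProduct_sub_l1Adjoint A b lam2 _ _))
  calc _ = φ lam1 - φ lam2 -
        (b ⬝ᵥ (lam1 - lam2) - l1Adjoint A (lam1 - lam2) (toLp 1 (xopt lam2))) :=
      congrArg _ (sum_sub_mul_eq_dotProduct_sub_l1Adjoint A b (lam1 - lam2) (xopt lam2))
    _ ≤ ‖l1Adjoint A‖ ^ 2 / (2 * η) * ‖lam1 - lam2‖ ^ 2 := hsmooth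
    _ ≤ oneOneNorm A ^ 2 / (2 * η) * linfNorm (lam1 - lam2) ^ 2 := by
      rw [norm_eq_linfNorm]
      gcongr
      exact norm_l1Adjoint_le A
end

section
/- Let x₁, x₂ ∈ ℝ^n and λ₁, λ₂ ∈ ℝ^m satisfy ∇f(x₁) = −Aᵀλ₁ and ∇f(x₂) = −Aᵀλ₂. Then ‖x₁ − x₂‖_1 ≤ (‖A‖_{1→1} / η) ‖λ₁ − λ₂‖_∞. -/
open Finset

/-!
Adding the two strong convexity inequalities, `f` at `x₁` tested at `x₂` and conversely, makes the
subgradient map strongly monotone: `η ‖x₁ - x₂‖₁² ≤ ⟨g₁ - g₂, x₁ - x₂⟩`. With `gₖ = -Aᵀλₖ`, Hölder's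
inequality bounds the right-hand side by `‖Aᵀ(λ₁ - λ₂)‖_∞ ‖x₁ - x₂‖₁`, and `‖Aᵀ‖_{∞→∞} = ‖A‖_{1→1}`.
-/

open Matrix

section StrongSubgradient

variable {E : Type*} [AddCommGroup E] [Module ℝ E]

/-- `g` is a subgradient of `f` at `x` relative to the set `s`, with modulus of strong convexity `η`
with respect to the seminorm `p`. A function differentiable and `η`-strongly convex on the whole
space has its derivative as such a subgradient at every point, with `s = Set.univ`; a proper
convex function with values in `(-∞, ∞]` is encoded by taking for `s` its effective domain. -/
def HasStrongSubgradientWithinAt (p : Seminorm ℝ E) (η : ℝ) (f : E → ℝ) (g : E →ₗ[ℝ] ℝ)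
    (s : Set E) (x : E) : Prop :=
  ∀ ⦃y⦄, y ∈ s → f x + g (y - x) + η / 2 * p (y - x) ^ 2 ≤ f y

namespace HasStrongSubgradientWithinAt

variable {p : Seminorm ℝ E} {η : ℝ} {f : E → ℝ} {g h : E →ₗ[ℝ] ℝ} {s : Set E} {x y : E}

theorem mul_sq_le_sub_apply (hg : HasStrongSubgradientWithinAt p η f g s x)
    (hh : HasStrongSubgradientWithinAt p η f h s y) (hx : x ∈ s) (hy : y ∈ s) :
    η * p (x - y) ^ 2 ≤ (g - h) (x - y) := by
  have at_x : f x + -g (x - y) + η / 2 * p (x - y) ^ 2 ≤ f y := by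
    simpa only [← neg_sub x y, map_neg, map_neg_eq_map] using hg hy
  have at_y : f y + h (x - y) + η / 2 * p (x - y) ^ 2 ≤ f x := hh hx
  rw [LinearMap.sub_apply]
  linarith

theorem mul_le_of_sub_apply_le (hg : HasStrongSubgradientWithinAt p η f g s x)
    (hh : HasStrongSubgradientWithinAt p η f h s y) (hx : x ∈ s) (hy : y ∈ s) {C : ℝ}
    (hC : 0 ≤ C) (hgh : (g - h) (x - y) ≤ C * p (x - y)) : η * p (x - y) ≤ C := by
  rcases (apply_nonneg p (x - y)).eq_or_lt with hzero | hpos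
  · rwa [← hzero, mul_zero]
  · refine le_of_mul_le_mul_right ?_ hpos
    calc η * p (x - y) * p (x - y) = η * p (x - y) ^ 2 := by ring
      _ ≤ (g - h) (x - y) := hg.mul_sq_le_sub_apply hh hx hy
      _ ≤ C * p (x - y) := hgh

end HasStrongSubgradientWithinAt

end StrongSubgradient

section Norms

variable {m n k : ℕ}

/-- The `ℓ1`-norm `l1Norm` bundled as a seminorm on `ℝᵏ`, which makes it available to
`HasStrongSubgradientWithinAt`. -/
noncomputable def l1Seminorm (k : ℕ) : Seminorm ℝ (Fin k → ℝ) :=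
  Seminorm.of l1Norm
    (fun x y =>
      calc ∑ i, |x i + y i| ≤ ∑ i, (|x i| + |y i|) := sum_le_sum fun i _ => abs_add_le (x i) (y i)
        _ = l1Norm x + l1Norm y := sum_add_distrib)
    (fun c x =>
      calc ∑ i, |c * x i| = ∑ i, |c| * |x i| := by simp only [abs_mul]
        _ = ‖c‖ * l1Norm x := (mul_sum ..).symm)

theorem l1Norm_nonneg (x : Fin k → ℝ) : 0 ≤ l1Norm x :=
  sum_nonneg fun _ _ => abs_nonneg _

theorem linfNorm_nonneg (x : Fin k → ℝ) : 0 ≤ linfNorm x :=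
  Real.iSup_nonneg fun _ => abs_nonneg _

theorem abs_apply_le_linfNorm (x : Fin k → ℝ) (i : Fin k) : |x i| ≤ linfNorm x :=
  le_ciSup (f := fun i => |x i|) (Set.finite_range _).bddAbove i

theorem oneOneNorm_nonneg_s9 (A : Matrix (Fin m) (Fin n) ℝ) : 0 ≤ oneOneNorm A :=
  Real.iSup_nonneg fun j => l1Norm_nonneg (Aᵀ j)

theorem l1Norm_transpose_apply_le_oneOneNorm (A : Matrix (Fin m) (Fin n) ℝ) (j : Fin n) :
    l1Norm (Aᵀ j) ≤ oneOneNorm A :=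
  le_ciSup (f := fun j => l1Norm (Aᵀ j)) (Set.finite_range _).bddAbove j

theorem abs_dotProduct_le_l1Norm_mul_linfNorm (v w : Fin k → ℝ) :
    |v ⬝ᵥ w| ≤ l1Norm v * linfNorm w :=
  calc |v ⬝ᵥ w| ≤ ∑ i, |v i * w i| := abs_sum_le_sum_abs _ _
    _ = ∑ i, |v i| * |w i| := by simp only [abs_mul]
    _ ≤ ∑ i, |v i| * linfNorm w := by gcongr with i; exact abs_apply_le_linfNorm w i
    _ = l1Norm v * linfNorm w := (sum_mul ..).symm

theorem linfNorm_transpose_mulVec_le (A : Matrix (Fin m) (Fin n) ℝ) (u : Fin m → ℝ) :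
    linfNorm (Aᵀ *ᵥ u) ≤ oneOneNorm A * linfNorm u := by
  refine Real.iSup_le (fun j => ?_) (mul_nonneg (oneOneNorm_nonneg_s9 A) (linfNorm_nonneg u))
  calc |(Aᵀ *ᵥ u) j| ≤ l1Norm (Aᵀ j) * linfNorm u := abs_dotProduct_le_l1Norm_mul_linfNorm _ _
    _ ≤ oneOneNorm A * linfNorm u :=
      mul_le_mul_of_nonneg_right (l1Norm_transpose_apply_le_oneOneNorm A j) (linfNorm_nonneg u)

theorem abs_transpose_mulVec_dotProduct_le (A : Matrix (Fin m) (Fin n) ℝ) (u : Fin m → ℝ)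
    (w : Fin n → ℝ) : |(Aᵀ *ᵥ u) ⬝ᵥ w| ≤ oneOneNorm A * linfNorm u * l1Norm w :=
  calc |(Aᵀ *ᵥ u) ⬝ᵥ w| = |w ⬝ᵥ (Aᵀ *ᵥ u)| := by rw [dotProduct_comm]
    _ ≤ l1Norm w * linfNorm (Aᵀ *ᵥ u) := abs_dotProduct_le_l1Norm_mul_linfNorm _ _
    _ ≤ l1Norm w * (oneOneNorm A * linfNorm u) :=
      mul_le_mul_of_nonneg_left (linfNorm_transpose_mulVec_le A u) (l1Norm_nonneg w)
    _ = oneOneNorm A * linfNorm u * l1Norm w := mul_comm _ _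

end Norms

theorem stmt9_general {m n : ℕ} (A : Matrix (Fin m) (Fin n) ℝ) {η : ℝ} (hη : 0 < η)
    {f : (Fin n → ℝ) → ℝ} {s : Set (Fin n → ℝ)} {x₁ x₂ : Fin n → ℝ} (hx₁ : x₁ ∈ s) (hx₂ : x₂ ∈ s)
    {lam₁ lam₂ : Fin m → ℝ}
    (h₁ : HasStrongSubgradientWithinAt (l1Seminorm n) η f
      (-dotProductBilin ℝ ℝ (Aᵀ *ᵥ lam₁)) s x₁)
    (h₂ : HasStrongSubgradientWithinAt (l1Seminorm n) η f
      (-dotProductBilin ℝ ℝ (Aᵀ *ᵥ lam₂)) s x₂) :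
    l1Norm (x₁ - x₂) ≤ oneOneNorm A / η * linfNorm (lam₁ - lam₂) := by
  have subgradient_sub_le :
      -((Aᵀ *ᵥ lam₁) ⬝ᵥ (x₁ - x₂)) - -((Aᵀ *ᵥ lam₂) ⬝ᵥ (x₁ - x₂)) ≤
        oneOneNorm A * linfNorm (lam₁ - lam₂) * l1Norm (x₁ - x₂) :=
    calc _ = -((Aᵀ *ᵥ (lam₁ - lam₂)) ⬝ᵥ (x₁ - x₂)) := by
          rw [mulVec_sub, sub_dotProduct]; ring
      _ ≤ _ := (neg_le_abs _).trans (abs_transpose_mulVec_dotProduct_le A _ _)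
  rw [div_mul_eq_mul_div, le_div_iff₀' hη]
  exact h₁.mul_le_of_sub_apply_le h₂ hx₁ hx₂
    (mul_nonneg (oneOneNorm_nonneg_s9 A) (linfNorm_nonneg _)) subgradient_sub_le

theorem stmt9 (m n : ℕ) (A : Fin m → Fin n → ℝ)
    (η : ℝ) (hη : 0 < η) (f : (Fin n → ℝ) → ℝ)
    (hdiff : Differentiable ℝ f)
    (hsc : ∀ x x' : Fin n → ℝ,
      f x + fderiv ℝ f x (x' - x) + η / 2 * (l1Norm (x' - x)) ^ 2 ≤ f x')
    (x1 x2 : Fin n → ℝ) (lam1 lam2 : Fin m → ℝ)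
    (h1 : ∀ w : Fin n → ℝ, fderiv ℝ f x1 w = -∑ j, (∑ i, A i j * lam1 i) * w j)
    (h2 : ∀ w : Fin n → ℝ, fderiv ℝ f x2 w = -∑ j, (∑ i, A i j * lam2 i) * w j) :
    l1Norm (x1 - x2) ≤ oneOneNorm A / η * linfNorm (lam1 - lam2) :=
  stmt9_general (.of A) hη (Set.mem_univ x1) (Set.mem_univ x2)
    (fun y _ => (h1 (y - x1) ▸ hsc x1 y :)) (fun y _ => (h2 (y - x2) ▸ hsc x2 y :))
end

section
/- Let φ : ℝ^m → ℝ be convex and differentiable, δ > 0, and ψ : ℝ^m → ℝ differentiable with Bregman divergence B_ψ(z, z') = ψ(z) − ψ(z') − ⟨∇ψ(z'), z − z'⟩ satisfying B_ψ(z, z') ≥ (1/(2δ))‖z − z'‖_∞² for all z, z'. Let ᾱ ≥ 0, α > 0, M > 0 satisfy δ M α² = ᾱ + α =: ᾱ⁺. Let λ, z ∈ ℝ^m, set μ = (α z + ᾱ λ)/ᾱ⁺, let z⁺ ∈ ℝ^m satisfy ⟨α ∇φ(μ) + ∇ψ(z⁺) − ∇ψ(z), w − z⁺⟩ ≥ 0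 for all w ∈ ℝ^m, set λ⁺ = (α z⁺ + ᾱ λ)/ᾱ⁺, and assume φ(λ⁺) − φ(μ) − ⟨∇φ(μ), λ⁺ − μ⟩ ≤ (M/2)‖λ⁺ − μ‖_∞². Then for every w ∈ ℝ^m: ᾱ⁺ φ(λ⁺) − ᾱ φ(λ) ≤ α (φ(μ) + ⟨∇φ(μ), w − μ⟩) + B_ψ(w, z) − B_ψ(w, z⁺). -/
open Finset

/-- Bregman divergence of a differentiable function ψ on ℝ^m. -/
noncomputable def bregman {m : ℕ} (ψ : (Fin m → ℝ) → ℝ) (z z' : Fin m → ℝ) : ℝ :=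
  ψ z - ψ z' - fderiv ℝ ψ z' (z - z')

/-!
Since `ᾱ⁺ (λ⁺ - μ) = α (z⁺ - z)`, the relation `δ M α² = ᾱ⁺` is exactly what turns `ᾱ⁺` times the
quadratic bound on the error of linearizing `φ` at `μ` into `‖z⁺ - z‖² / (2δ) ≤ B_ψ(z⁺, z)`. The
three-point identity for Bregman divergences and the optimality of `z⁺` bound `B_ψ(z⁺, z)` by
`α ⟨∇φ(μ), w - z⁺⟩ + B_ψ(w, z) - B_ψ(w, z⁺)`. What remains is the linearization of `φ` at `μ`, which
is affine along the convex combination `λ⁺` of `z⁺` and `λ` and lies below `φ` at `λ`.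
-/

section BregmanDivergence

variable {E : Type*} [AddCommGroup E] [Module ℝ E]

/-- The Bregman divergence of `ψ` at base point `y`, with respect to a linear functional `d` in the
role of the gradient of `ψ` at `y`. Taking the functional as an argument allows `d` to be a
subgradient and requires no topology on `E`. -/
def bregmanDiv (ψ : E → ℝ) (d : Module.Dual ℝ E) (x y : E) : ℝ :=
  ψ x - ψ y - d (x - y)

theorem bregmanDiv_nonneg_of_hasLineDerivAt {s : Set E} {φ : E → ℝ} {g : Module.Dual ℝ E} {x y : E}
    (hφ : ConvexOn ℝ s φ) (hx : x ∈ s) (hy : y ∈ s)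
    (hg : HasLineDerivAt ℝ φ (g (x - y)) y (x - y)) :
    0 ≤ bregmanDiv φ g x y := by
  have hline (t : ℝ) : AffineMap.lineMap y x t = y + t • (x - y) := by
    rw [AffineMap.lineMap_apply_module', add_comm]
  have hconv : ConvexOn ℝ (AffineMap.lineMap y x ⁻¹' s) fun t : ℝ ↦ φ (y + t • (x - y)) := by
    simpa only [Function.comp_def, hline] using hφ.comp_affineMap (AffineMap.lineMap (k := ℝ) y x)
  have hslope := hconv.le_slope_of_hasDerivAt (x := 0) (y := 1)
    (by simpa using hy) (by simpa using hx) one_pos hg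
  have hgrad : g (x - y) ≤ φ x - φ y := by simpa [slope_def_field] using hslope
  exact sub_nonneg.2 hgrad

theorem bregmanDiv_sub_bregmanDiv (ψ : E → ℝ) (d d' : Module.Dual ℝ E) (w x y : E) :
    bregmanDiv ψ d w x - bregmanDiv ψ d' w y = bregmanDiv ψ d y x + (d' - d) (w - y) := by
  simp only [bregmanDiv, LinearMap.sub_apply, map_sub]
  ring

theorem mul_add_sub_mul_le_of_bregmanDiv_nonneg {φ : E → ℝ} {g : Module.Dual ℝ E} {a α : ℝ}
    {x x' y z : E} (ha : 0 ≤ a) (hx' : (a + α) • x' = α • z + a • x)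
    (hφ : 0 ≤ bregmanDiv φ g x y) :
    (a + α) * φ x' - a * φ x ≤ α * (φ y + g (z - y)) + (a + α) * bregmanDiv φ g x' y := by
  have hg : (a + α) * g x' = α * g z + a * g x := by
    simpa only [map_add, map_smul, smul_eq_mul] using congrArg g hx'
  have hsub : 0 ≤ a * bregmanDiv φ g x y := mul_nonneg ha hφ
  simp only [bregmanDiv, map_sub] at hsub ⊢
  linarith

theorem seminorm_sq_eq_of_smul_eq_smul (p : Seminorm ℝ E) {A α δ M : ℝ} {u v : E} (hA : A ≠ 0)
    (hrel : δ * M * α ^ 2 = A) (huv : A • u = α • v) :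
    p v ^ 2 = δ * M * A * p u ^ 2 := by
  have hp : |A| * p u = |α| * p v := by
    simpa only [map_smul_eq_mul, Real.norm_eq_abs] using congrArg p huv
  have hsq : A ^ 2 * p u ^ 2 = α ^ 2 * p v ^ 2 := by
    rw [← sq_abs A, ← sq_abs α, ← mul_pow, ← mul_pow, hp]
  refine mul_left_cancel₀ hA ?_
  calc A * p v ^ 2 = δ * M * (α ^ 2 * p v ^ 2) := by rw [← hrel]; ring
    _ = A * (δ * M * A * p u ^ 2) := by rw [← hsq]; ring

theorem mul_bregmanDiv_le_bregmanDiv (p : Seminorm ℝ E) {φ ψ : E → ℝ} {g d : Module.Dual ℝ E}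
    {A α δ M : ℝ} {x y z z' : E} (hA : 0 < A) (hrel : δ * M * α ^ 2 = A)
    (hxy : A • (x - y) = α • (z' - z))
    (hφ : bregmanDiv φ g x y ≤ M / 2 * p (x - y) ^ 2)
    (hψ : 1 / (2 * δ) * p (z' - z) ^ 2 ≤ bregmanDiv ψ d z' z) :
    A * bregmanDiv φ g x y ≤ bregmanDiv ψ d z' z := by
  have hδ : δ ≠ 0 := by
    rintro rfl
    simp only [zero_mul] at hrel
    exact hA.ne hrel
  calc A * bregmanDiv φ g x y ≤ A * (M / 2 * p (x - y) ^ 2) := by gcongr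
    _ = 1 / (2 * δ) * p (z' - z) ^ 2 := by
      rw [seminorm_sq_eq_of_smul_eq_smul p hA.ne' hrel hxy]
      field_simp
    _ ≤ bregmanDiv ψ d z' z := hψ

theorem stmt10_general (p : Seminorm ℝ E) {s : Set E} {φ ψ : E → ℝ} {g d d' : Module.Dual ℝ E}
    {a α δ M : ℝ} {lam lam' μ z z' : E} (ha : 0 ≤ a) (haα : 0 < a + α)
    (hrel : δ * M * α ^ 2 = a + α) (hlam : lam ∈ s) (hz' : z' ∈ s)
    (hg : ∀ x ∈ s, 0 ≤ bregmanDiv φ g x μ)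
    (hd : ∀ x ∈ s, 1 / (2 * δ) * p (x - z) ^ 2 ≤ bregmanDiv ψ d x z)
    (hμ : (a + α) • μ = α • z + a • lam) (hlam' : (a + α) • lam' = α • z' + a • lam)
    (hopt : ∀ w ∈ s, 0 ≤ α * g (w - z') + d' (w - z') - d (w - z'))
    (hline : bregmanDiv φ g lam' μ ≤ M / 2 * p (lam' - μ) ^ 2) {w : E} (hw : w ∈ s) :
    (a + α) * φ lam' - a * φ lam ≤
      α * (φ μ + g (w - μ)) + bregmanDiv ψ d w z - bregmanDiv ψ d' w z' := by
  have hstep : (a + α) • (lam' - μ) = α • (z' - z) := by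
    rw [smul_sub, hlam', hμ, add_sub_add_right_eq_sub, smul_sub]
  have hdesc : (a + α) * bregmanDiv φ g lam' μ ≤ bregmanDiv ψ d z' z :=
    mul_bregmanDiv_le_bregmanDiv p haα hrel hstep hline (hd z' hz')
  have hprox : bregmanDiv ψ d z' z ≤
      α * g (w - z') + (bregmanDiv ψ d w z - bregmanDiv ψ d' w z') := by
    rw [bregmanDiv_sub_bregmanDiv, LinearMap.sub_apply]
    linarith [hopt w hw]
  have hsplit : g (w - μ) = g (w - z') + g (z' - μ) := by
    rw [← map_add, sub_add_sub_cancel]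
  calc (a + α) * φ lam' - a * φ lam
      ≤ α * (φ μ + g (z' - μ)) + (a + α) * bregmanDiv φ g lam' μ :=
        mul_add_sub_mul_le_of_bregmanDiv_nonneg ha hlam' (hg lam hlam)
    _ ≤ α * (φ μ + g (z' - μ)) +
          (α * g (w - z') + (bregmanDiv ψ d w z - bregmanDiv ψ d' w z')) := by
        gcongr
        exact hdesc.trans hprox
    _ = α * (φ μ + g (w - μ)) + bregmanDiv ψ d w z - bregmanDiv ψ d' w z' := by
        rw [hsplit]
        ring

end BregmanDivergence

theorem linfNorm_eq_norm {k : ℕ} (x : Fin k → ℝ) : linfNorm x = ‖x‖ :=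
  (PiLp.norm_eq_ciSup _).symm.trans (PiLp.norm_toLp x)

theorem smul_eq_of_eq_div {ι 𝕜 : Type*} [Field 𝕜] {A α a : 𝕜} {x y v : ι → 𝕜} (hA : A ≠ 0)
    (hv : v = fun i ↦ (α * x i + a * y i) / A) : A • v = α • x + a • y := by
  subst hv
  ext i
  exact mul_div_cancel₀ _ hA

theorem stmt10 (m : ℕ) (φ ψ : (Fin m → ℝ) → ℝ)
    (hφconv : ConvexOn ℝ Set.univ φ) (hφdiff : Differentiable ℝ φ)
    (hψdiff : Differentiable ℝ ψ)
    (δ : ℝ) (hδ : 0 < δ)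
    (hB : ∀ z z' : Fin m → ℝ,
      1 / (2 * δ) * (linfNorm (z - z')) ^ 2 ≤ bregman ψ z z')
    (abar α M : ℝ) (habar : 0 ≤ abar) (hα : 0 < α) (hM : 0 < M)
    (hrel : δ * M * α ^ 2 = abar + α)
    (lam z : Fin m → ℝ)
    (μ : Fin m → ℝ) (hμ : μ = fun i => (α * z i + abar * lam i) / (abar + α))
    (zp : Fin m → ℝ)
    (hzp : ∀ w : Fin m → ℝ,
      0 ≤ α * fderiv ℝ φ μ (w - zp) + fderiv ℝ ψ zp (w - zp) - fderiv ℝ ψ z (w - zp))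
    (lamp : Fin m → ℝ)
    (hlamp : lamp = fun i => (α * zp i + abar * lam i) / (abar + α))
    (hline : φ lamp - φ μ - fderiv ℝ φ μ (lamp - μ) ≤ M / 2 * (linfNorm (lamp - μ)) ^ 2) :
    ∀ w : Fin m → ℝ,
      (abar + α) * φ lamp - abar * φ lam ≤
        α * (φ μ + fderiv ℝ φ μ (w - μ)) + bregman ψ w z - bregman ψ w zp := by
  have hA : 0 < abar + α := by positivity
  have hgrad (x) (hx : x ∈ Set.univ) : 0 ≤ bregmanDiv φ (fderiv ℝ φ μ) x μ :=
    bregmanDiv_nonneg_of_hasLineDerivAt hφconv hx (Set.mem_univ μ)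
      ((hφdiff μ).hasFDerivAt.hasLineDerivAt (x - μ))
  simp only [linfNorm_eq_norm] at hB hline
  exact fun w ↦ stmt10_general (normSeminorm ℝ (Fin m → ℝ)) (d := fderiv ℝ ψ z)
    (d' := fderiv ℝ ψ zp) habar hA hrel (Set.mem_univ lam) (Set.mem_univ zp) hgrad
    (fun x _ ↦ hB x z) (smul_eq_of_eq_div hA.ne' hμ) (smul_eq_of_eq_div hA.ne' hlamp)
    (fun w _ ↦ hzp w) hline (Set.mem_univ w)
end

section
/- Let δ > 0, L > 0, η > 0, and let (M^t)_{t≥0} be a sequence of reals with 0 < M^t ≤ 2L/η for all t. Define ᾱ^0 = 0 and ᾱ^{t+1} = ᾱ^t + (1 + √(1 + 4 δ M^t ᾱ^t)) / (2 δ M^t) for t ≥ 0. Then ᾱ^t ≥ η (t+1)² / (8 δ L) for all t ≥ 1. -/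
/-! Put `m t = δ * M t`. The increment `(1 + √(1 + 4 * m * a)) / (2 * m)` is at least
`1 / (2 * m) + √a / √m`, so adding it to `a` raises `√a` by at least `1 / (2 * √m)`. From `a ≥ 0`
the increment is at least `1 / m`, so the very first step raises the lower bound `0` for `√a` by
twice that amount. Summing these gains gives `√(a t) ≥ (t + 1) / (2 * √K)` whenever `m ≤ K`;
here `K = 2 * δ * L / η`. -/

/-- The step size of the accelerated scheme with parameter `m` at accumulated step size `a`: for
`0 < m` and `0 ≤ a`, the positive root `x` of `m * x ^ 2 = a + x`. -/
noncomputable def acceleratedStep (m a : ℝ) : ℝ :=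
  (1 + √(1 + 4 * m * a)) / (2 * m)

section Step

variable {m a : ℝ}

theorem inv_le_acceleratedStep (hm : 0 < m) (ha : 0 ≤ a) : m⁻¹ ≤ acceleratedStep m a := by
  have one_le_sqrt : 1 ≤ √(1 + 4 * m * a) :=
    Real.one_le_sqrt.2 (le_add_of_nonneg_right (by positivity))
  calc m⁻¹ = (1 + 1) / (2 * m) := by field_simp; norm_num
    _ ≤ acceleratedStep m a := by unfold acceleratedStep; gcongr

theorem add_sqrt_div_sqrt_le_acceleratedStep (hm : 0 < m) (ha : 0 ≤ a) :
    1 / (2 * m) + √a / √m ≤ acceleratedStep m a := by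
  have le_sqrt : 2 * (√m * √a) ≤ √(1 + 4 * m * a) := by
    apply Real.le_sqrt_of_sq_le
    rw [mul_pow, mul_pow, Real.sq_sqrt hm.le, Real.sq_sqrt ha]
    linarith
  calc 1 / (2 * m) + √a / √m = (1 + 2 * (√m * √a)) / (2 * m) := by
        field_simp
        linear_combination -2 * √a * Real.sq_sqrt hm.le
    _ ≤ acceleratedStep m a := by unfold acceleratedStep; gcongr

theorem sqrt_add_le_sqrt_add_acceleratedStep (hm : 0 < m) (ha : 0 ≤ a) :
    √a + 1 / (2 * √m) ≤ √(a + acceleratedStep m a) := by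
  apply Real.le_sqrt_of_sq_le
  calc (√a + 1 / (2 * √m)) ^ 2 = √a ^ 2 + √a / √m + 1 / (4 * √m ^ 2) := by field_simp; ring
    _ = a + √a / √m + 1 / (4 * m) := by rw [Real.sq_sqrt ha, Real.sq_sqrt hm.le]
    _ ≤ a + √a / √m + 1 / (2 * m) := by gcongr; norm_num
    _ ≤ a + acceleratedStep m a := by linarith [add_sqrt_div_sqrt_le_acceleratedStep hm ha]

end Step

section Recursion

variable {m a : ℕ → ℝ} (hm : ∀ t, 0 < m t) (ha₀ : 0 ≤ a 0)
  (ha : ∀ t, a (t + 1) = a t + acceleratedStep (m t) (a t))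

include hm ha₀ ha

theorem nonneg_of_acceleratedStep (t : ℕ) : 0 ≤ a t := by
  induction t with
  | zero => exact ha₀
  | succ t ih =>
    rw [ha]
    exact add_nonneg ih ((inv_pos.2 (hm t)).le.trans (inv_le_acceleratedStep (hm t) ih))

theorem add_sum_le_sqrt_of_acceleratedStep {t : ℕ} (ht : 1 ≤ t) :
    1 / (2 * √(m 0)) + ∑ i ∈ Finset.range t, 1 / (2 * √(m i)) ≤ √(a t) := by
  induction t, ht using Nat.le_induction with
  | base =>
    have inv_le : (m 0)⁻¹ ≤ a 1 := by
      rw [ha]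
      exact (inv_le_acceleratedStep (hm 0) ha₀).trans (le_add_of_nonneg_left ha₀)
    calc 1 / (2 * √(m 0)) + ∑ i ∈ Finset.range 1, 1 / (2 * √(m i)) = √(m 0)⁻¹ := by
          rw [Finset.sum_range_one, Real.sqrt_inv]; ring
      _ ≤ √(a 1) := Real.sqrt_le_sqrt inv_le
  | succ t _ ih =>
    have gain := sqrt_add_le_sqrt_add_acceleratedStep (hm t)
      (nonneg_of_acceleratedStep hm ha₀ ha t)
    rw [Finset.sum_range_succ, ha]
    linarith

theorem sq_div_le_of_acceleratedStep {K : ℝ} (hK : ∀ t, m t ≤ K) {t : ℕ} (ht : 1 ≤ t) :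
    ((t : ℝ) + 1) ^ 2 / (4 * K) ≤ a t := by
  have K_pos : 0 < K := (hm 0).trans_le (hK 0)
  have gain_ge (i : ℕ) : 1 / (2 * √K) ≤ 1 / (2 * √(m i)) := by
    have := hm i
    gcongr
    exact hK i
  have le_sqrt : (t + 1) / (2 * √K) ≤ √(a t) :=
    calc (t + 1) / (2 * √K) = 1 / (2 * √K) + ∑ _i ∈ Finset.range t, 1 / (2 * √K) := by
          rw [Finset.sum_const, Finset.card_range, nsmul_eq_mul]; ring
      _ ≤ 1 / (2 * √(m 0)) + ∑ i ∈ Finset.range t, 1 / (2 * √(m i)) :=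
          add_le_add (gain_ge 0) (Finset.sum_le_sum fun i _ => gain_ge i)
      _ ≤ √(a t) := add_sum_le_sqrt_of_acceleratedStep hm ha₀ ha ht
  calc ((t : ℝ) + 1) ^ 2 / (4 * K) = ((t + 1) / (2 * √K)) ^ 2 := by
        rw [div_pow, mul_pow, Real.sq_sqrt K_pos.le]; norm_num
    _ ≤ a t := (Real.le_sqrt (by positivity) (nonneg_of_acceleratedStep hm ha₀ ha t)).1 le_sqrt

end Recursion

theorem stmt12_general {δ L η : ℝ} (hδ : 0 < δ)
    {M : ℕ → ℝ} (hM : ∀ t : ℕ, 0 < M t ∧ M t ≤ 2 * L / η)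
    {abar : ℕ → ℝ} (habar0 : 0 ≤ abar 0)
    (habar : ∀ t : ℕ,
      abar (t + 1) = abar t + (1 + Real.sqrt (1 + 4 * δ * M t * abar t)) / (2 * δ * M t))
    {t : ℕ} (ht : 1 ≤ t) : η * ((t : ℝ) + 1) ^ 2 / (8 * δ * L) ≤ abar t := by
  have hstep (t : ℕ) : abar (t + 1) = abar t + acceleratedStep (δ * M t) (abar t) := by
    simp only [habar, acceleratedStep, mul_assoc]
  have hK (t : ℕ) : δ * M t ≤ δ * (2 * L / η) := mul_le_mul_of_nonneg_left (hM t).2 hδ.le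
  calc η * ((t : ℝ) + 1) ^ 2 / (8 * δ * L) = ((t : ℝ) + 1) ^ 2 / (4 * (δ * (2 * L / η))) := by
        rw [← mul_div_assoc, ← mul_div_assoc, div_div_eq_mul_div]; ring
    _ ≤ abar t :=
        sq_div_le_of_acceleratedStep (fun t => mul_pos hδ (hM t).1) habar0 hstep hK ht

theorem stmt12 (δ L η : ℝ) (hδ : 0 < δ) (hL : 0 < L) (hη : 0 < η)
    (M : ℕ → ℝ) (hM : ∀ t : ℕ, 0 < M t ∧ M t ≤ 2 * L / η)
    (abar : ℕ → ℝ) (habar0 : abar 0 = 0)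
    (habar : ∀ t : ℕ,
      abar (t + 1) = abar t + (1 + Real.sqrt (1 + 4 * δ * M t * abar t)) / (2 * δ * M t)) :
    ∀ t : ℕ, 1 ≤ t → η * ((t : ℝ) + 1) ^ 2 / (8 * δ * L) ≤ abar t :=
  fun _ ht => stmt12_general hδ hM habar0.ge habar ht
end

section
/- Let n ≥ 2 be an integer, ε ∈ (0,1), and η = ε/(4 log n). Define φ̃ : ℝ^n × ℝ^n → ℝ by φ̃(α, β) = η Σ_{i,j=1}^n exp(−(1 − α_i − β_j)/η − 1) − (1/n) Σ_{i=1}^n α_i − (1/n) Σ_{j=1}^n β_j. Then every global minimizer (α*, β*) of φ̃ satisfies α*_i = α*_j and β*_i = β*_j for all indices i, j, and moreover α*_i + β*_i = 1 + ε/(4 log n) − ε/2 for every i. -/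
open Finset

/-- The dual regularized OT objective with cost matrix 1ₙ1ₙᵀ and marginals r = c = (1/n)1ₙ. -/
noncomputable def phiTilde (n : ℕ) (η : ℝ) (a b : Fin n → ℝ) : ℝ :=
  η * ∑ i, ∑ j, Real.exp (-(1 - a i - b j) / η - 1) -
    (1 / (n : ℝ)) * ∑ i, a i - (1 / (n : ℝ)) * ∑ j, b j

/-!
Because the marginals have total mass one, the linear part of the objective can be distributed over
the `n ^ 2` entries of the plan. The objective then depends on `α` and `β` only through the sums
`αᵢ + βⱼ`, and it is a sum of copies of one strictly convex function of one variable. The constant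
value minimizing that function is attainable by all the sums `αᵢ + βⱼ` at once, so the minimizers
are exactly the pairs for which every sum takes this value.
-/

theorem le_of_forall_ne_lt {X M : Type*} [Preorder M] {f : X → M} {s : X}
    (hf : ∀ t ≠ s, f s < f t) (t : X) : f s ≤ f t := by
  obtain rfl | h := eq_or_ne t s
  · exact le_rfl
  · exact (hf t h).le

section UniqueMinimizers

variable {ι M : Type*} {X : ι → Type*} [Fintype ι] [AddCommMonoid M] [PartialOrder M]
  [IsOrderedCancelAddMonoid M] {f : ∀ i, X i → M} {s : ∀ i, X i}

theorem sum_apply_le_sum_apply (hf : ∀ i, ∀ t ≠ s i, f i (s i) < f i t) (x : ∀ i, X i) :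
    ∑ i, f i (s i) ≤ ∑ i, f i (x i) :=
  sum_le_sum fun i _ ↦ le_of_forall_ne_lt (hf i) (x i)

theorem eq_of_sum_apply_le_sum_apply (hf : ∀ i, ∀ t ≠ s i, f i (s i) < f i t) {x : ∀ i, X i}
    (hx : ∑ i, f i (x i) ≤ ∑ i, f i (s i)) : x = s := by
  by_contra hne
  obtain ⟨k, hk⟩ := Function.ne_iff.1 hne
  refine hx.not_gt (sum_lt_sum (fun i _ ↦ ?_) ⟨k, mem_univ k, hf k _ hk⟩)
  exact le_of_forall_ne_lt (hf i) (x i)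

end UniqueMinimizers

theorem forall_add_eq_iff {ι M : Type*} [Add M] [IsCancelAdd M] {f g : ι → M} {s : M} :
    (∀ i j, f i + g j = s) ↔
      (∀ i j, f i = f j) ∧ (∀ i j, g i = g j) ∧ ∀ i, f i + g i = s where
  mp h :=
    ⟨fun i j ↦ add_right_cancel ((h i i).trans (h j i).symm),
      fun i j ↦ add_left_cancel ((h i i).trans (h i j).symm), fun i ↦ h i i⟩
  mpr := fun ⟨hf, _, hfg⟩ i j ↦ hf i j ▸ hfg j

/-- The contribution of a single entry of the transport plan to the entropic dual objective, as a
function of the sum `t` of the two potentials at that entry. Here `c` is the cost of the entry and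
`w` is its mass under the product of the two marginals. -/
noncomputable def dualSummand (η w c t : ℝ) : ℝ :=
  η * Real.exp (-(c - t) / η - 1) - w * t

theorem dualSummand_eq_mul_exp_sub {η w : ℝ} (hη : η ≠ 0) (hw : 0 < w) (c t : ℝ) :
    dualSummand η w c t =
      η * w * Real.exp ((t - (c + η * (1 + Real.log w))) / η) - w * t := by
  have h_exponent : -(c - t) / η - 1 =
      Real.log w + (t - (c + η * (1 + Real.log w))) / η := by
    field_simp
    ring
  rw [dualSummand, h_exponent, Real.exp_add, Real.exp_log hw, mul_assoc]

theorem dualSummand_lt_of_ne {η w c t : ℝ} (hη : 0 < η) (hw : 0 < w)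
    (ht : t ≠ c + η * (1 + Real.log w)) :
    dualSummand η w c (c + η * (1 + Real.log w)) < dualSummand η w c t := by
  rw [dualSummand_eq_mul_exp_sub hη.ne' hw, dualSummand_eq_mul_exp_sub hη.ne' hw]
  set s := c + η * (1 + Real.log w)
  have h_exp : (t - s) / η + 1 < Real.exp ((t - s) / η) :=
    Real.add_one_lt_exp (div_ne_zero (sub_ne_zero.2 ht) hη.ne')
  calc η * w * Real.exp ((s - s) / η) - w * s
      = η * w * ((t - s) / η + 1) - w * t := by
        rw [sub_self, zero_div, Real.exp_zero]
        field_simp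
        ring
    _ < η * w * Real.exp ((t - s) / η) - w * t := by gcongr

theorem phiTilde_eq_sum_dualSummand {n : ℕ} (hn : n ≠ 0) (η : ℝ) (a b : Fin n → ℝ) :
    phiTilde n η a b =
      ∑ p : Fin n × Fin n, dualSummand η (1 / (n : ℝ) ^ 2) 1 (a p.1 + b p.2) := by
  have hn' : (n : ℝ) ≠ 0 := Nat.cast_ne_zero.2 hn
  simp only [phiTilde, dualSummand, Fintype.sum_prod_type, sum_sub_distrib, ← mul_sum,
    sum_add_distrib, sum_const, card_univ, Fintype.card_fin, nsmul_eq_mul, sub_sub]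
  field_simp

theorem forall_phiTilde_le_iff {n : ℕ} (hn : n ≠ 0) {η : ℝ} (hη : 0 < η) {as bs : Fin n → ℝ} :
    (∀ a b : Fin n → ℝ, phiTilde n η as bs ≤ phiTilde n η a b) ↔
      ∀ i j, as i + bs j = 1 + η - 2 * η * Real.log n := by
  have hw : (0 : ℝ) < 1 / (n : ℝ) ^ 2 := by positivity
  have hs : 1 + η * (1 + Real.log (1 / (n : ℝ) ^ 2)) = 1 + η - 2 * η * Real.log n := by
    rw [one_div, Real.log_inv, Real.log_pow]
    push_cast
    ring
  simp only [phiTilde_eq_sum_dualSummand hn, ← hs]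
  set s := 1 + η * (1 + Real.log (1 / (n : ℝ) ^ 2))
  have h_lt (_ : Fin n × Fin n) (t : ℝ) (ht : t ≠ s) := dualSummand_lt_of_ne hη hw ht
  constructor
  · intro hmin i j
    have h_const := hmin (fun _ ↦ s) (fun _ ↦ 0)
    simp only [add_zero] at h_const
    exact congrFun (eq_of_sum_apply_le_sum_apply h_lt h_const) (i, j)
  · intro h_sum a b
    simp only [h_sum]
    exact sum_apply_le_sum_apply h_lt fun p ↦ a p.1 + b p.2

theorem stmt17_general {n : ℕ} (hn : n ≠ 0) {η : ℝ} (hη : 0 < η) {as bs : Fin n → ℝ} :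
    (∀ a b : Fin n → ℝ, phiTilde n η as bs ≤ phiTilde n η a b) ↔
      (∀ i j : Fin n, as i = as j) ∧ (∀ i j : Fin n, bs i = bs j) ∧
        ∀ i : Fin n, as i + bs i = 1 + η - 2 * η * Real.log n :=
  (forall_phiTilde_le_iff hn hη).trans forall_add_eq_iff

theorem stmt17 (n : ℕ) (hn : 2 ≤ n) (ε : ℝ) (hε : ε ∈ Set.Ioo (0 : ℝ) 1)
    (η : ℝ) (hη : η = ε / (4 * Real.log (n : ℝ)))
    (as bs : Fin n → ℝ)
    (hmin : ∀ a b : Fin n → ℝ, phiTilde n η as bs ≤ phiTilde n η a b) :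
    (∀ i j : Fin n, as i = as j) ∧ (∀ i j : Fin n, bs i = bs j) ∧
      (∀ i : Fin n, as i + bs i = 1 + ε / (4 * Real.log (n : ℝ)) - ε / 2) := by
  have h_log : 0 < Real.log n := Real.log_pos (by exact_mod_cast hn)
  have h_half : 2 * η * Real.log n = ε / 2 := by rw [hη]; field_simp; ring
  rw [← hη, ← h_half]
  exact (stmt17_general (by omega) (hη ▸ div_pos hε.1 (by positivity))).1 hmin
end
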